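/- arXiv:math/0405433 — 3 statements merged into one kernel-verified Lean document; each statement's English description precedes it below -/
import Mathlib

section
/- For any i, j ≥ 0 with i + j = 1, the set Bad(i,j) ⊆ ℝ² has Hausdorff dimension 2. -/
open scoped ENNReal

/-- The distance from a real number to the nearest integer. -/
noncomputable def distToNearestInt (y : ℝ) : ℝ := |y - (round y : ℝ)|

/-- For weights `i, j ≥ 0` with `i + j = 1`, the set `Bad(i,j)` of pairs
`(x₁, x₂) ∈ ℝ²` for which there exists `c > 0` such that for every integer `q ≥ 1` one has
`max{‖q x₁‖^(1/i), ‖q x₂‖^(1/j)} > c / q`, the maximum being taken over the components with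
positive weight (a component with weight `0` imposes no condition). -/
def badPair (i j : ℝ) : Set (Fin 2 → ℝ) :=
  {x | ∃ c : ℝ, 0 < c ∧ ∀ q : ℕ, 0 < q →
    (0 < i ∧ c / (q : ℝ) < distToNearestInt ((q : ℝ) * x 0) ^ (1 / i)) ∨
    (0 < j ∧ c / (q : ℝ) < distToNearestInt ((q : ℝ) * x 1) ^ (1 / j))}


/-- The point `d` lies in the threefold enlargement of the cell with index `c`. -/
def cellNear (h k : ℝ) (c : ℤ × ℤ) (d : ℝ × ℝ) : Prop :=
  ((c.1 : ℝ) - 1) * h ≤ d.1 ∧ d.1 ≤ ((c.1 : ℝ) + 2) * h ∧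
  ((c.2 : ℝ) - 1) * k ≤ d.2 ∧ d.2 ≤ ((c.2 : ℝ) + 2) * k

/-- Two indices in the same row which are near a fixed line are close. -/
lemma line_close (h k A B C : ℝ) (_hh : 0 < h) (hk : 0 < k) (hB : B ≠ 0)
    (hAB : |A| * h ≤ |B| * k) (a b b' : ℤ) (d d' : ℝ × ℝ)
    (hd : cellNear h k (a, b) d) (hd' : cellNear h k (a, b') d')
    (hl : A * d.1 + B * d.2 = C) (hl' : A * d'.1 + B * d'.2 = C) : b - b' ≤ 6 := by
  obtain ⟨h1, h2, h3, h4⟩ := hd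
  obtain ⟨h1', h2', h3', h4'⟩ := hd'
  simp only at *
  have e1 : |d.1 - d'.1| ≤ 3 * h := by rw [abs_le]; constructor <;> linarith
  have e2 : |B| * |d.2 - d'.2| = |A| * |d.1 - d'.1| := by
    rw [← abs_mul, ← abs_mul, ← abs_neg]; congr 1; linarith
  have hBp : 0 < |B| := abs_pos.mpr hB
  have e3 : |B| * |d.2 - d'.2| ≤ |B| * (3 * k) := by
    rw [e2]
    calc |A| * |d.1 - d'.1| ≤ |A| * (3 * h) := by gcongr
      _ ≤ _ := by linarith
  have e4 : |d.2 - d'.2| ≤ 3 * k := le_of_mul_le_mul_left e3 hBp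
  have e5 := (abs_le.mp e4).2
  have e6 : ((b : ℝ) - b') * k ≤ 6 * k := by linarith
  have e7 : (b : ℝ) - b' ≤ 6 := le_of_mul_le_mul_right e6 hk
  exact_mod_cast e7

lemma card_fibre_le (s : Finset ℤ) (hs : ∀ b ∈ s, ∀ b' ∈ s, b - b' ≤ 6) : s.card ≤ 13 := by
  rcases s.eq_empty_or_nonempty with rfl | ⟨b0, hb0⟩
  · simp
  have : s ⊆ Finset.Icc (b0 - 6) (b0 + 6) := by
    intro b hb
    have := hs b hb b0 hb0
    have := hs b0 hb0 b hb
    rw [Finset.mem_Icc]; constructor <;> linarith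
  calc s.card ≤ _ := Finset.card_le_card this
    _ = 13 := by rw [Int.card_Icc, show b0 + 6 + 1 - (b0 - 6) = 13 by ring]; rfl

open Classical in
lemma card_bad_le (h k A B C : ℝ) (hh : 0 < h) (hk : 0 < k) (hAB : A ≠ 0 ∨ B ≠ 0)
    (D : Set (ℝ × ℝ)) (S T : Finset ℤ) (m N : ℕ)
    (hS : 2 ^ m * S.card ≤ N) (hT : 2 ^ m * T.card ≤ N)
    (hD : ∀ d ∈ D, ∀ c ∈ S ×ˢ T, cellNear h k c d → A * d.1 + B * d.2 = C) :
    2 ^ m * ((S ×ˢ T).filter (fun c => ∃ d ∈ D, cellNear h k c d)).card ≤ 13 * N := by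
  rcases le_total (|A| * h) (|B| * k) with hle | hle
  · have hB : B ≠ 0 := by
      rintro rfl
      have : A ≠ 0 := by simpa using hAB
      have : 0 < |A| * h := by positivity
      simp at hle; linarith
    have := Finset.card_le_mul_card_image
      (s := (S ×ˢ T).filter (fun c => ∃ d ∈ D, cellNear h k c d)) (f := Prod.fst) 13 (by
        intro a _
        rw [← Finset.card_image_of_injOn (f := Prod.snd)]
        · apply card_fibre_le
          simp only [Finset.mem_image, Finset.mem_filter]
          rintro b ⟨c, ⟨⟨hc, d, hd, hcd⟩, rfl⟩, rfl⟩ b' ⟨c', ⟨⟨hc', d', hd', hcd'⟩, hcc⟩, rfl⟩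
          refine line_close h k A B C hh hk hB hle c.1 _ _ d d' hcd ?_ (hD d hd c hc hcd)
            (hD d' hd' c' hc' hcd')
          rw [← hcc]; exact hcd'
        · intro c hc c' hc' hcc
          simp only [Finset.coe_filter, Set.mem_ofPred_eq, Finset.mem_filter] at hc hc'
          exact Prod.ext (hc.2.trans hc'.2.symm) hcc)
    have h2 : (((S ×ˢ T).filter (fun c => ∃ d ∈ D, cellNear h k c d)).image Prod.fst).card
        ≤ S.card := by
      apply Finset.card_le_card
      intro x hx
      simp only [Finset.mem_image, Finset.mem_filter, Finset.mem_product] at hx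
      obtain ⟨c, ⟨⟨hc, _⟩, _⟩, rfl⟩ := hx
      exact hc
    calc _ ≤ 2 ^ m * (13 * S.card) := by gcongr; exact this.trans (by gcongr)
      _ = 13 * (2 ^ m * S.card) := by ring
      _ ≤ _ := by gcongr
  · have hA : A ≠ 0 := by
      rintro rfl
      have : B ≠ 0 := by simpa using hAB
      have : 0 < |B| * k := by positivity
      simp at hle; linarith
    have := Finset.card_le_mul_card_image
      (s := (S ×ˢ T).filter (fun c => ∃ d ∈ D, cellNear h k c d)) (f := Prod.snd) 13 (by
        intro a _
        rw [← Finset.card_image_of_injOn (f := Prod.fst)]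
        · apply card_fibre_le
          simp only [Finset.mem_image, Finset.mem_filter]
          rintro b ⟨c, ⟨⟨hc, d, hd, hcd⟩, rfl⟩, rfl⟩ b' ⟨c', ⟨⟨hc', d', hd', hcd'⟩, hcc⟩, rfl⟩
          refine line_close k h B A C hk hh hA hle c.2 _ _ (d.2, d.1) (d'.2, d'.1) ?_ ?_
            (by have := hD d hd c hc hcd; simp only; linarith)
            (by have := hD d' hd' c' hc' hcd'; simp only; linarith)
          · exact ⟨hcd.2.2.1, hcd.2.2.2, hcd.1, hcd.2.1⟩
          · rw [← hcc]
            exact ⟨hcd'.2.2.1, hcd'.2.2.2, hcd'.1, hcd'.2.1⟩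
        · intro c hc c' hc' hcc
          simp only [Finset.coe_filter, Set.mem_ofPred_eq, Finset.mem_filter] at hc hc'
          exact Prod.ext hcc (hc.2.trans hc'.2.symm))
    have h2 : (((S ×ˢ T).filter (fun c => ∃ d ∈ D, cellNear h k c d)).image Prod.snd).card
        ≤ T.card := by
      apply Finset.card_le_card
      intro x hx
      simp only [Finset.mem_image, Finset.mem_filter, Finset.mem_product] at hx
      obtain ⟨c, ⟨⟨_, hc⟩, _⟩, rfl⟩ := hx
      exact hc
    calc _ ≤ 2 ^ m * (13 * T.card) := by gcongr; exact this.trans (by gcongr)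
      _ = 13 * (2 ^ m * T.card) := by ring
      _ ≤ _ := by gcongr

/-- Enough good children. -/
lemma exists_children (m a b : ℕ) (hm : 5 ≤ m) (hab : a + b = 3 * m) (ha : m ≤ a) (hb : m ≤ b)
    (h k : ℝ) (hh : 0 < h) (hk : 0 < k) (D : Set (ℝ × ℝ)) (c : ℤ × ℤ) (A B C : ℝ)
    (hAB : A ≠ 0 ∨ B ≠ 0)
    (hD : ∀ d ∈ D, cellNear (2 ^ a * h) (2 ^ b * k) c d → A * d.1 + B * d.2 = C) :
    ∃ φ : Fin (2 ^ (3 * m - 1)) → ℤ × ℤ, Function.Injective φ ∧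
      ∀ t, (φ t).1 / 2 ^ a = c.1 ∧ (φ t).2 / 2 ^ b = c.2 ∧ ∀ d ∈ D, ¬ cellNear h k (φ t) d := by
  classical
  set S := Finset.Ico (c.1 * 2 ^ a) ((c.1 + 1) * 2 ^ a) with hS
  set T := Finset.Ico (c.2 * 2 ^ b) ((c.2 + 1) * 2 ^ b) with hT
  have cS : S.card = 2 ^ a := by
    rw [hS, Int.card_Ico, show (c.1 + 1) * 2 ^ a - c.1 * 2 ^ a = ((2 ^ a : ℕ) : ℤ) by
      push_cast; ring]; simp only [Int.toNat_natCast]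
  have cT : T.card = 2 ^ b := by
    rw [hT, Int.card_Ico, show (c.2 + 1) * 2 ^ b - c.2 * 2 ^ b = ((2 ^ b : ℕ) : ℤ) by
      push_cast; ring]; simp only [Int.toNat_natCast]
  have key : ∀ (n : ℕ) (x y : ℤ) (l w : ℝ), 0 < l → x * 2 ^ n ≤ y → y < (x + 1) * 2 ^ n →
      ((x : ℝ) - 1) * (2 ^ n * l) ≤ ((y : ℝ) - 1) * l ∧
      ((y : ℝ) + 2) * l ≤ ((x : ℝ) + 2) * (2 ^ n * l) := by
    intro n x y l w hl h1 h2
    have h1' : (x : ℝ) * 2 ^ n ≤ y := by exact_mod_cast h1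
    have h2' : (y : ℝ) + 1 ≤ (x + 1) * 2 ^ n := by exact_mod_cast h2
    have h3 : (1 : ℝ) ≤ 2 ^ n := one_le_pow₀ (by norm_num)
    constructor
    · rw [← mul_assoc]; gcongr; linarith
    · rw [← mul_assoc]; gcongr; linarith
  have hbad := card_bad_le h k A B C hh hk hAB D S T m (2 ^ (3 * m))
    (by rw [cS, ← pow_add]; exact Nat.pow_le_pow_right (by norm_num) (by omega))
    (by rw [cT, ← pow_add]; exact Nat.pow_le_pow_right (by norm_num) (by omega)) (by
      intro d hd c' hc' hcd
      apply hD d hd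
      rw [Finset.mem_product, hS, hT, Finset.mem_Ico, Finset.mem_Ico] at hc'
      obtain ⟨k1, k2⟩ := key a c.1 c'.1 h 0 hh hc'.1.1 hc'.1.2
      obtain ⟨k3, k4⟩ := key b c.2 c'.2 k 0 hk hc'.2.1 hc'.2.2
      obtain ⟨e1, e2, e3, e4⟩ := hcd
      exact ⟨k1.trans e1, e2.trans k2, k3.trans e3, e4.trans k4⟩)
  have htot := Finset.card_filter_add_card_filter_not (s := S ×ˢ T)
    (fun c => ∃ d ∈ D, cellNear h k c d)
  rw [Finset.card_product, cS, cT, ← pow_add, hab] at htot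
  have hM : 2 ^ (3 * m) = 2 * 2 ^ (3 * m - 1) := by
    rw [← pow_succ']; congr 1; omega
  have h32 : 32 ≤ 2 ^ m := by
    calc 32 = 2 ^ 5 := by norm_num
      _ ≤ _ := Nat.pow_le_pow_right (by norm_num) hm
  set bad := ((S ×ˢ T).filter (fun c => ∃ d ∈ D, cellNear h k c d)).card with hbaddef
  have hb2 : 32 * bad ≤ 13 * 2 ^ (3 * m) := le_trans (by gcongr) hbad
  have hgood : 2 ^ (3 * m - 1) ≤
      ((S ×ˢ T).filter (fun c => ¬ ∃ d ∈ D, cellNear h k c d)).card := by omega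
  obtain ⟨G, hG, hGc⟩ := Finset.exists_subset_card_eq hgood
  refine ⟨fun t => (G.equivFin.symm (Fin.cast hGc.symm t) : ℤ × ℤ), ?_, ?_⟩
  · intro t t' htt
    have := G.equivFin.symm.injective (Subtype.ext htt)
    simpa using this
  · intro t
    have ht := hG (G.equivFin.symm (Fin.cast hGc.symm t)).2
    simp only [Finset.mem_filter, Finset.mem_product, hS, hT, Finset.mem_Ico] at ht
    have hdiv : ∀ (n : ℕ) (x y : ℤ), x * 2 ^ n ≤ y → y < (x + 1) * 2 ^ n → y / 2 ^ n = x := by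
      intro n x y h1 h2
      have : (0 : ℤ) < 2 ^ n := by positivity
      apply le_antisymm
      · exact Int.lt_add_one_iff.mp (Int.ediv_lt_of_lt_mul this h2)
      · exact (Int.le_ediv_iff_mul_le this).mpr h1
    refine ⟨hdiv _ _ _ ht.1.1.1 ht.1.1.2, hdiv _ _ _ ht.1.2.1 ht.1.2.2, ?_⟩
    intro d hd hcd
    exact ht.2 ⟨d, hd, hcd⟩

open MeasureTheory in
/-- The cell at level `n` determined by the sequence of choices `ω`. -/
def cantorCell {M : ℕ} (φ : ℕ → ℤ × ℤ → Fin M → ℤ × ℤ) (ω : ℕ → Fin M) : ℕ → ℤ × ℤ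
  | 0 => (0, 0)
  | n + 1 => φ n (cantorCell φ ω n) (ω n)

lemma nested_iSup (a e : ℕ → ℕ) (he : ∀ n, e (n + 1) = e n + a n) (x : ℕ → ℤ)
    (hx : ∀ n, x (n + 1) / 2 ^ a n = x n) (n : ℕ) :
    (x n : ℝ) * (1 / 2 ^ e n) ≤ (⨆ n, (x n : ℝ) * (1 / 2 ^ e n)) ∧
    (⨆ n, (x n : ℝ) * (1 / 2 ^ e n)) ≤ ((x n : ℝ) + 1) * (1 / 2 ^ e n) := by
  have h1 : ∀ n, x n * 2 ^ a n ≤ x (n + 1) ∧ x (n + 1) + 1 ≤ (x n + 1) * 2 ^ a n := by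
    intro n
    have hp : (0 : ℤ) < 2 ^ a n := by positivity
    constructor
    · rw [← hx n]; exact Int.ediv_mul_le _ hp.ne'
    · rw [← hx n]; exact Int.lt_ediv_add_one_mul_self _ hp
  have hmono : Monotone (fun n => (x n : ℝ) * (1 / 2 ^ e n)) := by
    apply monotone_nat_of_le_succ
    intro n
    have h2 : (x n : ℝ) * 2 ^ a n ≤ x (n + 1) := by exact_mod_cast (h1 n).1
    rw [he n, pow_add]
    calc (x n : ℝ) * (1 / 2 ^ e n) = (x n * 2 ^ a n) * (1 / (2 ^ e n * 2 ^ a n)) := by field_simp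
      _ ≤ _ := by gcongr
  have hanti : Antitone (fun n => ((x n : ℝ) + 1) * (1 / 2 ^ e n)) := by
    apply antitone_nat_of_succ_le
    intro n
    have h2 : (x (n + 1) : ℝ) + 1 ≤ (x n + 1) * 2 ^ a n := by exact_mod_cast (h1 n).2
    rw [he n, pow_add]
    calc ((x (n + 1) : ℝ) + 1) * (1 / (2 ^ e n * 2 ^ a n))
        ≤ ((x n + 1) * 2 ^ a n) * (1 / (2 ^ e n * 2 ^ a n)) := by gcongr
      _ = _ := by field_simp
  have hle : ∀ n k, (x n : ℝ) * (1 / 2 ^ e n) ≤ ((x k : ℝ) + 1) * (1 / 2 ^ e k) := by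
    intro n k
    calc (x n : ℝ) * (1 / 2 ^ e n) ≤ (x (max n k) : ℝ) * (1 / 2 ^ e (max n k)) :=
          hmono (le_max_left _ _)
      _ ≤ ((x (max n k) : ℝ) + 1) * (1 / 2 ^ e (max n k)) := by gcongr; linarith
      _ ≤ _ := hanti (le_max_right _ _)
  constructor
  · refine le_ciSup (f := fun n => (x n : ℝ) * (1 / 2 ^ e n)) ⟨((x 0 : ℝ) + 1) * (1 / 2 ^ e 0), ?_⟩ n
    rintro _ ⟨k, rfl⟩
    exact hle k 0
  · exact ciSup_le fun k => hle k n

/-- The limit point of a branch. -/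
noncomputable def cantorPt {M : ℕ} (e f : ℕ → ℕ) (φ : ℕ → ℤ × ℤ → Fin M → ℤ × ℤ)
    (ω : ℕ → Fin M) : Fin 2 → ℝ :=
  ![⨆ n, ((cantorCell φ ω n).1 : ℝ) * (1 / 2 ^ e n), ⨆ n, ((cantorCell φ ω n).2 : ℝ) * (1 / 2 ^ f n)]

lemma measurable_cantorCell {M : ℕ} (φ : ℕ → ℤ × ℤ → Fin M → ℤ × ℤ) (n : ℕ) :
    Measurable (fun ω => cantorCell φ ω n) := by
  induction n with
  | zero => exact measurable_const
  | succ n ih =>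
    have h1 : Measurable (fun p : (ℤ × ℤ) × Fin M => φ n p.1 p.2) := measurable_of_countable _
    exact h1.comp (ih.prodMk (measurable_pi_apply n))

lemma measurable_cantorPt {M : ℕ} (e f : ℕ → ℕ) (φ : ℕ → ℤ × ℤ → Fin M → ℤ × ℤ) :
    Measurable (cantorPt e f φ) := by
  rw [measurable_pi_iff]
  intro t
  fin_cases t
  · refine Measurable.iSup (f := fun n ω => ((cantorCell φ ω n).1 : ℝ) * (1 / 2 ^ e n)) fun n => ?_
    exact (measurable_of_countable (fun p : ℤ × ℤ => (p.1 : ℝ) * (1 / 2 ^ e n))).comp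
      (measurable_cantorCell φ n)
  · refine Measurable.iSup (f := fun n ω => ((cantorCell φ ω n).2 : ℝ) * (1 / 2 ^ f n)) fun n => ?_
    exact (measurable_of_countable (fun p : ℤ × ℤ => (p.2 : ℝ) * (1 / 2 ^ f n))).comp
      (measurable_cantorCell φ n)

lemma cantorCell_inj {M : ℕ} (a b : ℕ → ℕ) (φ : ℕ → ℤ × ℤ → Fin M → ℤ × ℤ)
    (hinj : ∀ n c, Function.Injective (φ n c))
    (h1 : ∀ n c t, (φ n c t).1 / 2 ^ a n = c.1) (h2 : ∀ n c t, (φ n c t).2 / 2 ^ b n = c.2)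
    (ω ω' : ℕ → Fin M) (n : ℕ) (h : cantorCell φ ω n = cantorCell φ ω' n) :
    ∀ i < n, ω i = ω' i := by
  induction n with
  | zero => intro i hi; omega
  | succ n ih =>
    simp only [cantorCell] at h
    have hc : cantorCell φ ω n = cantorCell φ ω' n := by
      apply Prod.ext
      · rw [← h1 n (cantorCell φ ω n) (ω n), h, h1]
      · rw [← h2 n (cantorCell φ ω n) (ω n), h, h2]
    intro i hi
    rcases Nat.lt_succ_iff_lt_or_eq.mp hi with hi | rfl
    · exact ih hc i hi
    · rw [hc] at h; exact hinj _ _ h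

open MeasureTheory in
/-- The uniform measure on branches. -/
noncomputable def branchMeasure (M : ℕ) [NeZero M] : Measure (ℕ → Fin M) :=
  Measure.infinitePi (fun _ : ℕ => (PMF.uniformOfFintype (Fin M)).toMeasure)

instance (M : ℕ) [NeZero M] : MeasureTheory.IsProbabilityMeasure (branchMeasure M) := by
  unfold branchMeasure; infer_instance

lemma branchMeasure_cell_le {M : ℕ} [NeZero M] (a b : ℕ → ℕ) (φ : ℕ → ℤ × ℤ → Fin M → ℤ × ℤ)
    (hinj : ∀ n c, Function.Injective (φ n c))
    (h1 : ∀ n c t, (φ n c t).1 / 2 ^ a n = c.1) (h2 : ∀ n c t, (φ n c t).2 / 2 ^ b n = c.2)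
    (n : ℕ) (c : ℤ × ℤ) :
    branchMeasure M {ω | cantorCell φ ω n = c} ≤ ((M : ENNReal)⁻¹) ^ n := by
  by_cases hne : ∃ ω0, cantorCell φ ω0 n = c
  · obtain ⟨ω0, hω0⟩ := hne
    have hsub : {ω | cantorCell φ ω n = c} ⊆
        Set.pi (Finset.range n : Set ℕ) (fun i => {ω0 i}) := by
      intro ω hω i hi
      have hi' : i < n := by simpa using hi
      exact cantorCell_inj a b φ hinj h1 h2 ω ω0 n (hω.trans hω0.symm) i hi'
    refine (MeasureTheory.measure_mono hsub).trans ?_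
    rw [branchMeasure, MeasureTheory.Measure.infinitePi_pi _ (fun i _ => measurableSet_singleton _)]
    simp
  · have : {ω | cantorCell φ ω n = c} = ∅ := by
      ext ω; simp only [Set.mem_ofPred_eq, Set.mem_empty_iff_false, iff_false]
      exact fun h => hne ⟨ω, h⟩
    rw [this]; simp

lemma index_close (l : ℕ) (w : ℝ) (W : ℕ) (hW : w * 2 ^ l = W) (x x' : ℤ) (X X' : ℝ)
    (h1 : (x : ℝ) * (1 / 2 ^ l) ≤ X) (h2' : X' ≤ ((x' : ℝ) + 1) * (1 / 2 ^ l))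
    (hd : |X - X'| ≤ w) : x - x' ≤ 1 + W := by
  have h3 := (abs_le.mp hd).2
  have hp : (0 : ℝ) < 2 ^ l := by positivity
  have h4 : (x : ℝ) * (1 / 2 ^ l) ≤ ((x' : ℝ) + 1) * (1 / 2 ^ l) + w := by linarith
  have h5 := mul_le_mul_of_nonneg_right h4 hp.le
  have h6 : (x : ℝ) ≤ x' + 1 + W := by
    rw [← hW]
    calc (x : ℝ) = (x : ℝ) * (1 / 2 ^ l) * 2 ^ l := by field_simp
      _ ≤ _ := h5
      _ = _ := by field_simp
  have h7 : x ≤ x' + 1 + W := by exact_mod_cast h6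
  linarith

lemma card_Icc_le (x : ℤ) (W : ℕ) (hW : 1 ≤ W) :
    (Finset.Icc (x - (1 + W)) (x + (1 + W))).card ≤ 5 * W := by
  rw [Int.card_Icc]; omega

lemma branchMeasure_preimage_le (m : ℕ) (hm : 5 ≤ m) (a b e f : ℕ → ℕ)
    (he0 : e 0 = 0) (hf0 : f 0 = 0)
    (he : ∀ n, e (n + 1) = e n + a n) (hf : ∀ n, f (n + 1) = f n + b n)
    (hab : ∀ n, a n + b n = 3 * m)
    (φ : ℕ → ℤ × ℤ → Fin (2 ^ (3 * m - 1)) → ℤ × ℤ)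
    (hinj : ∀ n c, Function.Injective (φ n c))
    (h1 : ∀ n c t, (φ n c t).1 / 2 ^ a n = c.1) (h2 : ∀ n c t, (φ n c t).2 / 2 ^ b n = c.2)
    (n : ℕ) (s : Set (Fin 2 → ℝ))
    (hs : ∀ x ∈ s, ∀ y ∈ s, dist x y ≤ (1 / 2) ^ (min (e n) (f n))) :
    branchMeasure (2 ^ (3 * m - 1)) (cantorPt e f φ ⁻¹' s) ≤
      ENNReal.ofReal (25 * 2 ^ n * ((1 / 2) ^ (min (e n) (f n))) ^ 2) := by
  by_cases hne : ∃ ω0, cantorPt e f φ ω0 ∈ s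
  swap
  · have : cantorPt e f φ ⁻¹' s = ∅ := by
      ext ω; simp only [Set.mem_preimage, Set.mem_empty_iff_false, iff_false]
      exact fun h => hne ⟨ω, h⟩
    rw [this]; simp
  obtain ⟨ω0, hω0⟩ := hne
  set μ := min (e n) (f n) with hμ
  have hμe : μ ≤ e n := min_le_left _ _
  have hμf : μ ≤ f n := min_le_right _ _
  have hW : ∀ l, μ ≤ l → ((1 : ℝ) / 2) ^ μ * 2 ^ l = ((2 ^ (l - μ) : ℕ) : ℝ) := by
    intro l hl
    obtain ⟨r, rfl⟩ := Nat.exists_eq_add_of_le hl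
    rw [Nat.add_sub_cancel_left, pow_add, ← mul_assoc, ← mul_pow]
    norm_num
  have hsum : ∀ n, e n + f n = 3 * m * n := by
    intro n
    induction n with
    | zero => simp [he0, hf0]
    | succ n ih => rw [he, hf]; have := hab n; nlinarith
  have hx : ∀ ω, ∀ n, ((cantorCell φ ω n).1 : ℝ) * (1 / 2 ^ e n) ≤ cantorPt e f φ ω 0 ∧
      cantorPt e f φ ω 0 ≤ (((cantorCell φ ω n).1 : ℝ) + 1) * (1 / 2 ^ e n) := by
    intro ω n
    exact nested_iSup a e he (fun n => (cantorCell φ ω n).1) (fun n => h1 n _ _) n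
  have hy : ∀ ω, ∀ n, ((cantorCell φ ω n).2 : ℝ) * (1 / 2 ^ f n) ≤ cantorPt e f φ ω 1 ∧
      cantorPt e f φ ω 1 ≤ (((cantorCell φ ω n).2 : ℝ) + 1) * (1 / 2 ^ f n) := by
    intro ω n
    exact nested_iSup b f hf (fun n => (cantorCell φ ω n).2) (fun n => h2 n _ _) n
  set c0 := cantorCell φ ω0 n with hc0
  set F := Finset.Icc (c0.1 - (1 + (2 ^ (e n - μ) : ℕ))) (c0.1 + (1 + (2 ^ (e n - μ) : ℕ))) ×ˢ
    Finset.Icc (c0.2 - (1 + (2 ^ (f n - μ) : ℕ))) (c0.2 + (1 + (2 ^ (f n - μ) : ℕ))) with hF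
  have hsub : cantorPt e f φ ⁻¹' s ⊆ ⋃ c ∈ F, {ω | cantorCell φ ω n = c} := by
    intro ω hω
    simp only [Set.mem_iUnion, exists_prop]
    refine ⟨cantorCell φ ω n, ?_, rfl⟩
    have hd := hs _ hω _ hω0
    have hd0 : ∀ t, |cantorPt e f φ ω t - cantorPt e f φ ω0 t| ≤ (1 / 2) ^ μ := by
      intro t
      have := dist_le_pi_dist (cantorPt e f φ ω) (cantorPt e f φ ω0) t
      rw [Real.dist_eq] at this
      exact this.trans hd
    have hd0' : ∀ t, |cantorPt e f φ ω0 t - cantorPt e f φ ω t| ≤ (1 / 2) ^ μ := by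
      intro t; rw [abs_sub_comm]; exact hd0 t
    have k1 := index_close (e n) _ _ (hW _ hμe) _ _ _ _ (hx ω n).1 (hx ω0 n).2 (hd0 0)
    have k2 := index_close (e n) _ _ (hW _ hμe) _ _ _ _ (hx ω0 n).1 (hx ω n).2 (hd0' 0)
    have k3 := index_close (f n) _ _ (hW _ hμf) _ _ _ _ (hy ω n).1 (hy ω0 n).2 (hd0 1)
    have k4 := index_close (f n) _ _ (hW _ hμf) _ _ _ _ (hy ω0 n).1 (hy ω n).2 (hd0' 1)
    rw [← hc0] at k1 k2 k3 k4
    rw [hF, Finset.mem_product, Finset.mem_Icc, Finset.mem_Icc]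
    refine ⟨⟨?_, ?_⟩, ?_, ?_⟩ <;> linarith
  have hcard : F.card ≤ 25 * 2 ^ (e n - μ + (f n - μ)) := by
    rw [hF, Finset.card_product]
    calc _ ≤ (5 * 2 ^ (e n - μ)) * (5 * 2 ^ (f n - μ)) :=
          Nat.mul_le_mul (card_Icc_le _ _ Nat.one_le_two_pow) (card_Icc_le _ _ Nat.one_le_two_pow)
      _ = _ := by rw [pow_add]; ring
  calc branchMeasure (2 ^ (3 * m - 1)) (cantorPt e f φ ⁻¹' s)
      ≤ branchMeasure (2 ^ (3 * m - 1)) (⋃ c ∈ F, {ω | cantorCell φ ω n = c}) :=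
        MeasureTheory.measure_mono hsub
    _ ≤ ∑ c ∈ F, branchMeasure (2 ^ (3 * m - 1)) {ω | cantorCell φ ω n = c} :=
        MeasureTheory.measure_biUnion_finset_le _ _
    _ ≤ ∑ c ∈ F, (((2 ^ (3 * m - 1) : ℕ) : ENNReal)⁻¹) ^ n :=
        Finset.sum_le_sum fun c _ => branchMeasure_cell_le a b φ hinj h1 h2 n c
    _ = (F.card : ENNReal) * (((2 ^ (3 * m - 1) : ℕ) : ENNReal)⁻¹) ^ n := by
        rw [Finset.sum_const, nsmul_eq_mul]
    _ ≤ ((25 * 2 ^ (e n - μ + (f n - μ)) : ℕ) : ENNReal) *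
          (((2 ^ (3 * m - 1) : ℕ) : ENNReal)⁻¹) ^ n := by gcongr
    _ = ENNReal.ofReal (((25 * 2 ^ (e n - μ + (f n - μ)) : ℕ) : ℝ) *
          (((2 ^ (3 * m - 1) : ℕ) : ℝ)⁻¹) ^ n) := by
        rw [ENNReal.ofReal_mul (by positivity), ENNReal.ofReal_pow (by positivity),
          ENNReal.ofReal_inv_of_pos (by positivity), ENNReal.ofReal_natCast, ENNReal.ofReal_natCast]
    _ = _ := by
        congr 1
        have hs3 := hsum n
        obtain ⟨r, hr⟩ := Nat.exists_eq_add_of_le hμe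
        obtain ⟨r', hr'⟩ := Nat.exists_eq_add_of_le hμf
        have hrr : r + r' + 2 * μ = (3 * m - 1) * n + n := by
          have : (3 * m - 1) * n + n = 3 * m * n := by
            obtain ⟨q, rfl⟩ := Nat.exists_eq_add_of_le hm
            rw [show 3 * (5 + q) - 1 = 14 + 3 * q by omega]; ring
          omega
        rw [hr, hr', Nat.add_sub_cancel_left, Nat.add_sub_cancel_left]
        push_cast
        rw [inv_pow, ← pow_mul, one_div, inv_pow, inv_pow, ← pow_mul]
        have h3 : (2 : ℝ) ^ (r + r') * 2 ^ (μ * 2) = 2 ^ ((3 * m - 1) * n) * 2 ^ n := by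
          rw [← pow_add, ← pow_add]; congr 1; omega
        field_simp
        linarith

open MeasureTheory in
lemma cantor_dim (m : ℕ) (hm : 5 ≤ m) (a b e f : ℕ → ℕ)
    (he0 : e 0 = 0) (hf0 : f 0 = 0)
    (he : ∀ n, e (n + 1) = e n + a n) (hf : ∀ n, f (n + 1) = f n + b n)
    (hab : ∀ n, a n + b n = 3 * m) (ha : ∀ n, m ≤ a n) (hb : ∀ n, m ≤ b n)
    (φ : ℕ → ℤ × ℤ → Fin (2 ^ (3 * m - 1)) → ℤ × ℤ)
    (hinj : ∀ n c, Function.Injective (φ n c))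
    (h1 : ∀ n c t, (φ n c t).1 / 2 ^ a n = c.1) (h2 : ∀ n c t, (φ n c t).2 / 2 ^ b n = c.2)
    (S : Set (Fin 2 → ℝ)) (hS : ∀ ω, cantorPt e f φ ω ∈ S)
    (δ : ℝ) (hδ : 0 < δ) (hδ2 : δ < 2) (hmδ : 1 ≤ m * δ) :
    ENNReal.ofReal (2 - δ) ≤ dimH S := by
  set μ := Measure.map (cantorPt e f φ) (branchMeasure (2 ^ (3 * m - 1))) with hμ
  have hmeas := measurable_cantorPt e f φ
  set E := fun n => min (e n) (f n) with hE
  have hE0 : E 0 = 0 := by simp [hE, he0]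
  have hElow : ∀ n, n * m ≤ E n := by
    intro n
    induction n with
    | zero => simp
    | succ n ih =>
      simp only [hE, le_min_iff] at ih ⊢
      rw [he, hf]
      have := ha n
      have := hb n
      constructor <;> nlinarith
  have hEup : ∀ n, E (n + 1) ≤ E n + 2 * m := by
    intro n
    simp only [hE]
    rw [he, hf]
    have := ha n
    have := hb n
    have := hab n
    omega
  -- the basic bound
  have hbound : ∀ n (s : Set (Fin 2 → ℝ)), Metric.ediam s ≤ ENNReal.ofReal ((1 / 2) ^ E n) →
      μ s ≤ ENNReal.ofReal (25 * 2 ^ n * ((1 / 2) ^ E n) ^ 2) := by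
    intro n s hs
    calc μ s ≤ μ (closure s) := measure_mono subset_closure
      _ = branchMeasure (2 ^ (3 * m - 1)) (cantorPt e f φ ⁻¹' closure s) :=
        Measure.map_apply hmeas isClosed_closure.measurableSet
      _ ≤ _ := by
        refine branchMeasure_preimage_le m hm a b e f he0 hf0 he hf hab φ hinj h1 h2 n _ ?_
        intro x hx y hy
        have h3 := Metric.edist_le_ediam_of_mem hx hy
        rw [Metric.ediam_closure] at h3
        have h4 := h3.trans hs
        rw [edist_dist] at h4
        exact (ENNReal.ofReal_le_ofReal_iff (by positivity)).mp h4
  set C : ENNReal := ENNReal.ofReal (25 * 16 ^ m) with hC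
  have hC0 : C ≠ 0 := by
    rw [hC]; simp only [ne_eq, ENNReal.ofReal_eq_zero, not_le]; positivity
  have hCt : C ≠ ⊤ := ENNReal.ofReal_ne_top
  have hmain : ∀ s : Set (Fin 2 → ℝ), Metric.ediam s ≤ 1 →
      μ s ≤ C * Metric.ediam s ^ (2 - δ) := by
    intro s hs
    have hfin : Metric.ediam s ≠ ⊤ := (hs.trans_lt ENNReal.one_lt_top).ne
    set ρ := (Metric.ediam s).toReal with hρ
    have hρe : Metric.ediam s = ENNReal.ofReal ρ := (ENNReal.ofReal_toReal hfin).symm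
    have hρ1 : ρ ≤ 1 := by
      have := ENNReal.toReal_mono ENNReal.one_ne_top hs
      simpa using this
    have hρ0 : 0 ≤ ρ := ENNReal.toReal_nonneg
    have hsmall : ∀ n, ((1 : ℝ) / 2) ^ E n ≤ (1 / 2) ^ n := by
      intro n
      apply pow_le_pow_of_le_one (by norm_num) (by norm_num)
      have := hElow n
      nlinarith
    rcases hρ0.eq_or_lt with h0 | hpos
    · have hz : μ s ≤ 0 := by
        have hlim : Filter.Tendsto (fun n : ℕ => ENNReal.ofReal (25 * (1 / 2) ^ n)) Filter.atTop
            (nhds 0) := by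
          have h5 : Filter.Tendsto (fun n : ℕ => (25 : ℝ) * (1 / 2) ^ n) Filter.atTop
              (nhds (25 * 0)) :=
            (tendsto_pow_atTop_nhds_zero_of_lt_one (by norm_num) (by norm_num)).const_mul _
          simpa using ENNReal.tendsto_ofReal h5
        refine ge_of_tendsto' hlim fun n => ?_
        refine (hbound n s (by rw [hρe, ← h0]; simp)).trans (ENNReal.ofReal_le_ofReal ?_)
        calc 25 * 2 ^ n * (((1 : ℝ) / 2) ^ E n) ^ 2 ≤ 25 * 2 ^ n * ((1 / 2) ^ n) ^ 2 := by
              exact mul_le_mul_of_nonneg_left (pow_le_pow_left₀ (by positivity) (hsmall n) 2)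
                (by positivity)
          _ = 25 * (2 * (1 / 2)) ^ n * (1 / 2) ^ n := by rw [mul_pow]; ring
          _ = _ := by norm_num
      exact hz.trans (zero_le)
    · have hex : ∃ n, ((1 : ℝ) / 2) ^ E n < ρ := by
        obtain ⟨n, hn⟩ := exists_pow_lt_of_lt_one hpos (show (1 : ℝ) / 2 < 1 by norm_num)
        exact ⟨n, (hsmall n).trans_lt hn⟩
      classical
      obtain ⟨N, hN, hNmin⟩ : ∃ N, ((1 : ℝ) / 2) ^ E N < ρ ∧
          ∀ k < N, ρ ≤ ((1 : ℝ) / 2) ^ E k :=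
        ⟨Nat.find hex, Nat.find_spec hex, fun k hk => not_lt.mp (Nat.find_min hex hk)⟩
      obtain ⟨n, rfl⟩ : ∃ n, N = n + 1 := by
        apply Nat.exists_eq_succ_of_ne_zero
        rintro rfl
        rw [hE0] at hN; simp at hN; linarith
      have hn := hNmin n (by omega)
      refine (hbound n s (by rw [hρe]; exact ENNReal.ofReal_le_ofReal hn)).trans ?_
      rw [hρe, ENNReal.ofReal_rpow_of_nonneg hρ0 (by linarith), hC,
        ← ENNReal.ofReal_mul (by positivity)]
      apply ENNReal.ofReal_le_ofReal
      have hw : ((1 : ℝ) / 2) ^ E n ≤ 4 ^ m * ρ := by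
        have h6 : ((1 : ℝ) / 2) ^ (E n + 2 * m) ≤ (1 / 2) ^ E (n + 1) :=
          pow_le_pow_of_le_one (by norm_num) (by norm_num) (hEup n)
        calc ((1 : ℝ) / 2) ^ E n = 4 ^ m * (1 / 2) ^ (E n + 2 * m) := by
              rw [pow_add, pow_mul, mul_left_comm, ← mul_pow]; norm_num
          _ ≤ 4 ^ m * ρ := by gcongr; exact h6.trans hN.le
      have h2n : (2 : ℝ) ^ n * ρ ^ δ ≤ 1 := by
        have h7 : ρ ≤ (1 / 2) ^ (n * m) :=
          hn.trans (pow_le_pow_of_le_one (by norm_num) (by norm_num) (hElow n))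
        have h8 : ρ ^ δ ≤ (1 / 2) ^ n := by
          calc ρ ^ δ ≤ (((1 : ℝ) / 2) ^ (n * m)) ^ δ := Real.rpow_le_rpow hρ0 h7 hδ.le
            _ = ((1 : ℝ) / 2) ^ ((n : ℝ) * (m * δ)) := by
              rw [← Real.rpow_natCast, ← Real.rpow_mul (by norm_num)]; push_cast; ring_nf
            _ ≤ ((1 : ℝ) / 2) ^ (n : ℝ) := by
              apply Real.rpow_le_rpow_of_exponent_ge (by norm_num) (by norm_num)
              nlinarith [(Nat.cast_nonneg n : (0 : ℝ) ≤ n)]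
            _ = _ := Real.rpow_natCast _ _
        calc (2 : ℝ) ^ n * ρ ^ δ ≤ 2 ^ n * (1 / 2) ^ n := by gcongr
          _ = 1 := by rw [← mul_pow]; norm_num
      have hρ2 : ρ ^ 2 = ρ ^ δ * ρ ^ (2 - δ) := by
        rw [← Real.rpow_add hpos, ← Real.rpow_natCast]; congr 1; push_cast; ring
      have hnn : 0 ≤ ρ ^ (2 - δ) := Real.rpow_nonneg hρ0 _
      calc 25 * 2 ^ n * (((1 : ℝ) / 2) ^ E n) ^ 2 ≤ 25 * 2 ^ n * (4 ^ m * ρ) ^ 2 := by gcongr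
        _ = 25 * (4 ^ m) ^ 2 * (2 ^ n * ρ ^ 2) := by ring
        _ = 25 * 16 ^ m * ((2 ^ n * ρ ^ δ) * ρ ^ (2 - δ)) := by
            rw [hρ2, ← pow_mul, mul_comm m 2, pow_mul]; norm_num; ring
        _ ≤ 25 * 16 ^ m * (1 * ρ ^ (2 - δ)) := by gcongr
        _ = _ := by ring
  have hle : C⁻¹ • μ ≤ Measure.hausdorffMeasure (2 - δ) := by
    refine Measure.le_hausdorffMeasure _ _ 1 one_pos fun s hs => ?_
    rw [Measure.smul_apply, smul_eq_mul]
    calc C⁻¹ * μ s ≤ C⁻¹ * (C * Metric.ediam s ^ (2 - δ)) := by gcongr; exact hmain s hs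
      _ = _ := by rw [← mul_assoc, ENNReal.inv_mul_cancel hC0 hCt, one_mul]
  have hμS : 1 ≤ μ S := by
    have h9 := Measure.le_map_apply (μ := branchMeasure (2 ^ (3 * m - 1))) hmeas.aemeasurable S
    have h10 : cantorPt e f φ ⁻¹' S = Set.univ := Set.eq_univ_of_forall hS
    rw [h10, measure_univ] at h9
    exact h9
  have hne : Measure.hausdorffMeasure (((2 - δ).toNNReal : NNReal) : ℝ) S ≠ 0 := by
    rw [Real.coe_toNNReal _ (by linarith)]
    have h11 := hle S
    rw [Measure.smul_apply, smul_eq_mul] at h11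
    have h12 : C⁻¹ * 1 ≤ C⁻¹ * μ S := by gcongr
    have h13 : 0 < C⁻¹ * 1 := by simpa using hCt
    exact (h13.trans_le (h12.trans h11)).ne'
  exact le_dimH_of_hausdorffMeasure_ne_zero hne

lemma triple_collinear (N h k : ℝ) (hN : 0 < N) (hhk : h * k = 1 / N ^ 3)
    (c : ℤ × ℤ) (d d' d'' : ℝ × ℝ)
    (hd : cellNear h k c d) (hd' : cellNear h k c d') (hd'' : cellNear h k c d'')
    (q q' q'' : ℕ) (hq : 0 < q) (hq' : 0 < q') (hq'' : 0 < q'')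
    (hqN : 4 * (q : ℝ) ≤ N) (hqN' : 4 * (q' : ℝ) ≤ N) (hqN'' : 4 * (q'' : ℝ) ≤ N)
    (x y x' y' x'' y'' : ℤ) (hx : d.1 = x / q) (hy : d.2 = y / q)
    (hx' : d'.1 = x' / q') (hy' : d'.2 = y' / q') (hx'' : d''.1 = x'' / q'')
    (hy'' : d''.2 = y'' / q'') :
    (d'.1 - d.1) * (d''.2 - d.2) - (d''.1 - d.1) * (d'.2 - d.2) = 0 := by
  set z : ℤ := q * (x' * y'' - x'' * y') - q' * (x * y'' - x'' * y) + q'' * (x * y' - x' * y)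
    with hz
  have hq0 : (0 : ℝ) < q := by exact_mod_cast hq
  have hq0' : (0 : ℝ) < q' := by exact_mod_cast hq'
  have hq0'' : (0 : ℝ) < q'' := by exact_mod_cast hq''
  set det := (d'.1 - d.1) * (d''.2 - d.2) - (d''.1 - d.1) * (d'.2 - d.2) with hdet
  have hzd : (z : ℝ) = q * q' * q'' * det := by
    rw [hdet, hx, hy, hx', hy', hx'', hy'', hz]
    push_cast
    field_simp
    ring
  have hb : ∀ (p p' : ℝ × ℝ), cellNear h k c p → cellNear h k c p' →
      |p.1 - p'.1| ≤ 3 * h ∧ |p.2 - p'.2| ≤ 3 * k := by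
    rintro p p' ⟨e1, e2, e3, e4⟩ ⟨e1', e2', e3', e4'⟩
    rw [abs_le, abs_le]
    refine ⟨⟨?_, ?_⟩, ?_, ?_⟩ <;> linarith
  have h1 := hb d' d hd' hd
  have h2 := hb d'' d hd'' hd
  have hh0 : 0 ≤ 3 * h := (abs_nonneg _).trans h1.1
  have hdetle : |det| ≤ 18 * (1 / N ^ 3) := by
    calc |det| ≤ |(d'.1 - d.1) * (d''.2 - d.2)| + |(d''.1 - d.1) * (d'.2 - d.2)| := abs_sub _ _
      _ = |d'.1 - d.1| * |d''.2 - d.2| + |d''.1 - d.1| * |d'.2 - d.2| := by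
          rw [abs_mul, abs_mul]
      _ ≤ (3 * h) * (3 * k) + (3 * h) * (3 * k) := by
          apply add_le_add
          · exact mul_le_mul h1.1 h2.2 (abs_nonneg _) hh0
          · exact mul_le_mul h2.1 h1.2 (abs_nonneg _) hh0
      _ = 18 * (h * k) := by ring
      _ = _ := by rw [hhk]
  have hprod : (q : ℝ) * q' * q'' ≤ (N / 4) * (N / 4) * (N / 4) := by
    have : 0 < N / 4 := by positivity
    gcongr <;> linarith
  have hzlt : |(z : ℝ)| < 1 := by
    rw [hzd, abs_mul, abs_of_pos (by positivity)]
    calc (q : ℝ) * q' * q'' * |det| ≤ (N / 4) * (N / 4) * (N / 4) * (18 * (1 / N ^ 3)) := by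
          gcongr
      _ = 18 / 64 := by field_simp; norm_num
      _ < 1 := by norm_num
  have hz0 : z = 0 := by
    rw [← Int.abs_lt_one_iff]; exact_mod_cast hzlt
  rw [hz0] at hzd
  have : (q : ℝ) * q' * q'' ≠ 0 := by positivity
  have h3 := hzd.symm
  rw [Int.cast_zero, mul_eq_zero] at h3
  exact h3.resolve_left this

lemma rat_eq (N : ℝ) (hN : 0 < N) (q q' : ℕ) (hq : 0 < q) (hq' : 0 < q')
    (hqN : 4 * (q : ℝ) ≤ N) (hqN' : 4 * (q' : ℝ) ≤ N) (x x' : ℤ)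
    (h : |(x : ℝ) / q - x' / q'| ≤ 3 * (1 / N ^ 2)) : (x : ℝ) / q = x' / q' := by
  have hq0 : (0 : ℝ) < q := by exact_mod_cast hq
  have hq0' : (0 : ℝ) < q' := by exact_mod_cast hq'
  set z : ℤ := x * q' - x' * q with hz
  have hzd : (z : ℝ) = q * q' * ((x : ℝ) / q - x' / q') := by
    rw [hz]; push_cast; field_simp
  have hprod : (q : ℝ) * q' ≤ (N / 4) * (N / 4) := by
    have : 0 < N / 4 := by positivity
    gcongr <;> linarith
  have hzlt : |(z : ℝ)| < 1 := by
    rw [hzd, abs_mul, abs_of_pos (by positivity)]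
    calc (q : ℝ) * q' * |(x : ℝ) / q - x' / q'| ≤ (N / 4) * (N / 4) * (3 * (1 / N ^ 2)) := by
          gcongr
      _ = 3 / 16 := by field_simp; norm_num
      _ < 1 := by norm_num
  have hz0 : z = 0 := by
    rw [← Int.abs_lt_one_iff]; exact_mod_cast hzlt
  rw [hz0] at hzd
  have : (q : ℝ) * q' ≠ 0 := by positivity
  have h3 := hzd.symm
  rw [Int.cast_zero, mul_eq_zero] at h3
  exact sub_eq_zero.mp (h3.resolve_left this)

/-- The dangerous points at level `n`. -/
def dangerSet (i j : ℝ) (N : ℝ) : Set (ℝ × ℝ) :=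
  {d | ∃ q : ℕ, 0 < q ∧ 4 * (q : ℝ) ≤ N ∧ (0 < i → ∃ p : ℤ, d.1 = p / q) ∧
    (0 < j → ∃ p : ℤ, d.2 = p / q)}

lemma danger_line (i j N h k : ℝ) (hN : 0 < N) (hhk : h * k = 1 / N ^ 3)
    (hij : (0 < i ∧ 0 < j) ∨ (0 < j ∧ k = 1 / N ^ 2) ∨ (0 < i ∧ h = 1 / N ^ 2)) (c : ℤ × ℤ) :
    ∃ A B C : ℝ, (A ≠ 0 ∨ B ≠ 0) ∧
      ∀ d ∈ dangerSet i j N, cellNear h k c d → A * d.1 + B * d.2 = C := by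
  rcases hij with ⟨hi, hj⟩ | ⟨hj, hk⟩ | ⟨hi, hh⟩
  · by_cases hex : ∃ d d', d ∈ dangerSet i j N ∧ d' ∈ dangerSet i j N ∧ cellNear h k c d ∧
        cellNear h k c d' ∧ d ≠ d'
    · obtain ⟨d, d', hd, hd', hcd, hcd', hne⟩ := hex
      refine ⟨d'.2 - d.2, -(d'.1 - d.1), (d'.2 - d.2) * d.1 - (d'.1 - d.1) * d.2, ?_, ?_⟩
      · by_contra hcon
        push Not at hcon
        apply hne
        apply Prod.ext <;> linarith [hcon.1, hcon.2]
      · intro d'' hd'' hcd''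
        obtain ⟨q, hq, hqN, hx, hy⟩ := hd
        obtain ⟨q', hq', hqN', hx', hy'⟩ := hd'
        obtain ⟨q'', hq'', hqN'', hx'', hy''⟩ := hd''
        obtain ⟨x, hx⟩ := hx hi
        obtain ⟨y, hy⟩ := hy hj
        obtain ⟨x', hx'⟩ := hx' hi
        obtain ⟨y', hy'⟩ := hy' hj
        obtain ⟨x'', hx''⟩ := hx'' hi
        obtain ⟨y'', hy''⟩ := hy'' hj
        have := triple_collinear N h k hN hhk c d d' d'' hcd hcd' hcd'' q q' q'' hq hq' hq''
          hqN hqN' hqN'' x y x' y' x'' y'' hx hy hx' hy' hx'' hy''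
        linarith
    · by_cases hex1 : ∃ d, d ∈ dangerSet i j N ∧ cellNear h k c d
      · obtain ⟨d, hd, hcd⟩ := hex1
        refine ⟨1, 0, d.1, Or.inl one_ne_zero, ?_⟩
        intro d' hd' hcd'
        have : d = d' := by
          by_contra hne
          exact hex ⟨d, d', hd, hd', hcd, hcd', hne⟩
        rw [this]; ring
      · exact ⟨1, 0, 0, Or.inl one_ne_zero, fun d hd hcd => absurd ⟨d, hd, hcd⟩ hex1⟩
  · by_cases hex1 : ∃ d, d ∈ dangerSet i j N ∧ cellNear h k c d
    · obtain ⟨d, ⟨q, hq, hqN, _, hy⟩, hcd⟩ := hex1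
      refine ⟨0, 1, d.2, Or.inr one_ne_zero, ?_⟩
      rintro d' ⟨q', hq', hqN', _, hy'⟩ hcd'
      obtain ⟨y, hy⟩ := hy hj
      obtain ⟨y', hy'⟩ := hy' hj
      have := rat_eq N hN q' q hq' hq hqN' hqN y' y (by
        rw [← hy, ← hy', ← hk]
        obtain ⟨e1, e2, e3, e4⟩ := hcd
        obtain ⟨e1', e2', e3', e4'⟩ := hcd'
        rw [abs_le]; constructor <;> linarith)
      rw [hy, hy', this]; ring
    · exact ⟨1, 0, 0, Or.inl one_ne_zero, fun d hd hcd => absurd ⟨d, hd, hcd⟩ hex1⟩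
  · by_cases hex1 : ∃ d, d ∈ dangerSet i j N ∧ cellNear h k c d
    · obtain ⟨d, ⟨q, hq, hqN, hx, _⟩, hcd⟩ := hex1
      refine ⟨1, 0, d.1, Or.inl one_ne_zero, ?_⟩
      rintro d' ⟨q', hq', hqN', hx', _⟩ hcd'
      obtain ⟨x, hx⟩ := hx hi
      obtain ⟨x', hx'⟩ := hx' hi
      have := rat_eq N hN q' q hq' hq hqN' hqN x' x (by
        rw [← hx, ← hx', ← hh]
        obtain ⟨e1, e2, e3, e4⟩ := hcd
        obtain ⟨e1', e2', e3', e4'⟩ := hcd'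
        rw [abs_le]; constructor <;> linarith)
      rw [hx, hx', this]; ring
    · exact ⟨1, 0, 0, Or.inl one_ne_zero, fun d hd hcd => absurd ⟨d, hd, hcd⟩ hex1⟩

lemma coord_close (i x c L Q hc : ℝ) (hi : 0 < i) (hi1 : i ≤ 1) (hc0 : 0 < c) (hL : 1 ≤ L)
    (hQ : 0 < Q) (hci : c ^ i ≤ 1 / (2 * L ^ 2)) (q : ℕ) (hq : 0 < q) (hQL : Q ≤ L * q)
    (hcell : 1 / 2 * Q ^ (-(1 + i)) ≤ hc)
    (hx : distToNearestInt (q * x) ^ (1 / i) ≤ c / q) :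
    |x - (round ((q : ℝ) * x) : ℤ) / q| ≤ hc := by
  have hq0 : (0 : ℝ) < q := by exact_mod_cast hq
  have hd0 : 0 ≤ distToNearestInt (q * x) := abs_nonneg _
  have h1 : distToNearestInt (q * x) ≤ (c / q) ^ i := by
    calc distToNearestInt (q * x) = (distToNearestInt (q * x) ^ (1 / i)) ^ i := by
          rw [← Real.rpow_mul hd0, one_div_mul_cancel hi.ne', Real.rpow_one]
      _ ≤ _ := Real.rpow_le_rpow (Real.rpow_nonneg hd0 _) hx hi.le
  have h2 : |x - (round ((q : ℝ) * x) : ℤ) / q| = distToNearestInt (q * x) / q := by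
    unfold distToNearestInt
    rw [← abs_of_pos hq0, ← abs_div, abs_of_pos hq0]
    congr 1; field_simp
  have hqi : (q : ℝ) ^ (-(1 + i)) = 1 / (q ^ i * q) := by
    rw [Real.rpow_neg hq0.le, add_comm, Real.rpow_add hq0, Real.rpow_one, one_div]
  have hLi : 1 / L ^ 2 ≤ L ^ (-(1 + i)) := by
    rw [Real.rpow_neg (by linarith), ← one_div]
    apply one_div_le_one_div_of_le (by positivity)
    rw [← Real.rpow_natCast]
    apply Real.rpow_le_rpow_of_exponent_le hL
    push_cast; linarith
  have hqp : 0 < (q : ℝ) ^ (-(1 + i)) := Real.rpow_pos_of_pos hq0 _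
  rw [h2]
  calc distToNearestInt (q * x) / q ≤ (c / q) ^ i / q := by gcongr
    _ = c ^ i * (q : ℝ) ^ (-(1 + i)) := by
        rw [Real.div_rpow hc0.le hq0.le, hqi]; field_simp
    _ ≤ 1 / (2 * L ^ 2) * (q : ℝ) ^ (-(1 + i)) := by gcongr
    _ = 1 / 2 * (1 / L ^ 2 * (q : ℝ) ^ (-(1 + i))) := by field_simp
    _ ≤ 1 / 2 * (L ^ (-(1 + i)) * (q : ℝ) ^ (-(1 + i))) := by gcongr
    _ = 1 / 2 * (L * q) ^ (-(1 + i)) := by rw [Real.mul_rpow (by linarith) hq0.le]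
    _ ≤ 1 / 2 * Q ^ (-(1 + i)) := by
        gcongr 1 / 2 * ?_
        exact Real.rpow_le_rpow_of_nonpos hQ hQL (by linarith)
    _ ≤ hc := hcell

lemma cell_size (t i : ℝ) (l : ℕ) (hl : (l : ℝ) ≤ t * (1 + i) + 1) :
    1 / 2 * ((2 : ℝ) ^ t) ^ (-(1 + i)) ≤ 1 / 2 ^ l := by
  rw [← Real.rpow_mul (by norm_num), ← Real.rpow_natCast, one_div, one_div,
    ← Real.rpow_neg_one, ← Real.rpow_neg (by norm_num), ← Real.rpow_add (by norm_num)]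
  apply Real.rpow_le_rpow_of_exponent_le (by norm_num)
  linarith

lemma near_of_close (h : ℝ) (c : ℤ) (x d : ℝ) (h1 : (c : ℝ) * h ≤ x)
    (h2 : x ≤ ((c : ℝ) + 1) * h) (hd : |x - d| ≤ h) :
    ((c : ℝ) - 1) * h ≤ d ∧ d ≤ ((c : ℝ) + 2) * h := by
  rw [abs_le] at hd
  constructor <;> linarith [hd.1, hd.2]

lemma dimH_badPair_ge (i j : ℝ) (hi : 0 ≤ i) (hj : 0 ≤ j) (hij : i + j = 1)
    (δ : ℝ) (hδ : 0 < δ) (hδ2 : δ < 2) : ENNReal.ofReal (2 - δ) ≤ dimH (badPair i j) := by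
  obtain ⟨m, hm5, hmδ⟩ : ∃ m : ℕ, 5 ≤ m ∧ 1 ≤ m * δ := by
    obtain ⟨m0, hm0⟩ := exists_nat_ge (1 / δ)
    refine ⟨max 5 m0, le_max_left _ _, ?_⟩
    have h1 : 1 / δ ≤ ((max 5 m0 : ℕ) : ℝ) := hm0.trans (by exact_mod_cast le_max_right _ _)
    rwa [div_le_iff₀ hδ] at h1
  have hi1 : i ≤ 1 := by linarith
  have hj1 : j ≤ 1 := by linarith
  set u : ℕ → ℕ := fun n => ⌊(n : ℝ) * m * i⌋₊ with hu
  have hun : ∀ n : ℕ, (0 : ℝ) ≤ (n : ℝ) * m * i := fun n => by positivity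
  have hule : ∀ n : ℕ, (u n : ℝ) ≤ (n : ℝ) * m * i := fun n => Nat.floor_le (hun n)
  have huge : ∀ n : ℕ, (n : ℝ) * m * i < u n + 1 := fun n => Nat.lt_floor_add_one _
  have humono : ∀ n, u n ≤ u (n + 1) := by
    intro n
    apply Nat.floor_le_floor
    push_cast
    have : (0 : ℝ) ≤ m * i := by positivity
    nlinarith
  have hustep : ∀ n, u (n + 1) ≤ u n + m := by
    intro n
    have h1 : (u (n + 1) : ℝ) < u n + m + 1 := by
      have h2 := hule (n + 1)
      have h3 := huge n
      push_cast at h2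
      have : (m : ℝ) * i ≤ m := by
        have : (0 : ℝ) ≤ m := Nat.cast_nonneg m
        nlinarith
      nlinarith
    have : u (n + 1) < u n + m + 1 := by exact_mod_cast h1
    omega
  have hu0 : u 0 = 0 := by simp [hu]
  have hunm : ∀ n, u n ≤ n * m := by
    intro n
    induction n with
    | zero => simp [hu0]
    | succ n ih => have := hustep n; rw [Nat.succ_mul]; omega
  set e : ℕ → ℕ := fun n => n * m + u n with he_def
  set f : ℕ → ℕ := fun n => 2 * (n * m) - u n with hf_def
  set a : ℕ → ℕ := fun n => m + (u (n + 1) - u n) with ha_def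
  set b : ℕ → ℕ := fun n => 2 * m - (u (n + 1) - u n) with hb_def
  have he0 : e 0 = 0 := by simp [he_def, hu0]
  have hf0 : f 0 = 0 := by simp [hf_def]
  have he : ∀ n, e (n + 1) = e n + a n := by
    intro n
    have := humono n
    simp only [he_def, ha_def, Nat.succ_mul]; omega
  have hf : ∀ n, f (n + 1) = f n + b n := by
    intro n
    have := humono n
    have := hustep n
    have := hunm n
    simp only [hf_def, hb_def, Nat.succ_mul]; omega
  have hab : ∀ n, a n + b n = 3 * m := by
    intro n
    have := humono n
    have := hustep n
    simp only [ha_def, hb_def]; omega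
  have ha : ∀ n, m ≤ a n := fun n => by simp only [ha_def]; omega
  have hb : ∀ n, m ≤ b n := fun n => by have := hustep n; simp only [hb_def]; omega
  have hef : ∀ n, e n + f n = n * m * 3 := by
    intro n
    have := hunm n
    simp only [he_def, hf_def]; omega
  -- good children exist
  have hchild : ∀ n (c : ℤ × ℤ), ∃ φ : Fin (2 ^ (3 * m - 1)) → ℤ × ℤ, Function.Injective φ ∧
      ∀ t, (φ t).1 / 2 ^ a n = c.1 ∧ (φ t).2 / 2 ^ b n = c.2 ∧
        ∀ d ∈ dangerSet i j (2 ^ (n * m)),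
          ¬ cellNear (1 / 2 ^ e (n + 1)) (1 / 2 ^ f (n + 1)) (φ t) d := by
    intro n c
    obtain ⟨A, B, C, hAB, hline⟩ := danger_line i j (2 ^ (n * m)) (1 / 2 ^ e n) (1 / 2 ^ f n)
      (by positivity)
      (by rw [← pow_mul, ← hef n, pow_add _ (e n) (f n), one_div_mul_one_div]) (by
        rcases hi.eq_or_lt with hi0 | hi0
        · right; left
          have hun0 : u n = 0 := by simp [hu, ← hi0]
          refine ⟨by linarith, ?_⟩
          rw [← pow_mul]
          simp only [hf_def, hun0]
          rw [Nat.sub_zero, mul_comm 2]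
        · rcases hj.eq_or_lt with hj0 | hj0
          · right; right
            have hi1' : i = 1 := by linarith
            have hun0 : u n = n * m := by
              simp only [hu, hi1', mul_one]
              exact_mod_cast Nat.floor_natCast (n * m)
            refine ⟨hi0, ?_⟩
            rw [← pow_mul]
            simp only [he_def, hun0]
            rw [mul_two]
          · exact Or.inl ⟨hi0, hj0⟩) c
    refine exists_children m (a n) (b n) hm5 (hab n) (ha n) (hb n) _ _ (by positivity)
      (by positivity) _ c A B C hAB ?_
    intro d hd hcd
    apply hline d hd
    rw [he, hf, pow_add _ (e n) (a n), pow_add _ (f n) (b n)] at hcd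
    have s1 : (2 : ℝ) ^ a n * (1 / (2 ^ e n * 2 ^ a n)) = 1 / 2 ^ e n := by field_simp
    have s2 : (2 : ℝ) ^ b n * (1 / (2 ^ f n * 2 ^ b n)) = 1 / 2 ^ f n := by field_simp
    rwa [s1, s2] at hcd
  choose φ hinj hφ using hchild
  refine cantor_dim m hm5 a b e f he0 hf0 he hf hab ha hb φ hinj (fun n c t => (hφ n c t).1)
    (fun n c t => (hφ n c t).2.1) _ ?_ δ hδ hδ2 hmδ
  intro ω
  set X := cantorPt e f φ ω with hX
  have hx : ∀ n, ((cantorCell φ ω n).1 : ℝ) * (1 / 2 ^ e n) ≤ X 0 ∧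
      X 0 ≤ (((cantorCell φ ω n).1 : ℝ) + 1) * (1 / 2 ^ e n) := fun n =>
    nested_iSup a e he (fun n => (cantorCell φ ω n).1) (fun n => (hφ n _ _).1) n
  have hy : ∀ n, ((cantorCell φ ω n).2 : ℝ) * (1 / 2 ^ f n) ≤ X 1 ∧
      X 1 ≤ (((cantorCell φ ω n).2 : ℝ) + 1) * (1 / 2 ^ f n) := fun n =>
    nested_iSup b f hf (fun n => (cantorCell φ ω n).2) (fun n => (hφ n _ _).2.1) n
  set L : ℝ := 4 * (2 ^ m) ^ 2 with hL_def
  have hR1 : (1 : ℝ) ≤ 2 ^ m := one_le_pow₀ (by norm_num)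
  have hL : 1 ≤ L := by rw [hL_def]; nlinarith
  set ε : ℝ := 1 / (2 * L ^ 2) with hε
  have hε0 : 0 < ε := by positivity
  have hε1 : ε ≤ 1 := by
    rw [hε, div_le_one (by positivity)]; nlinarith
  have hii : 0 ≤ 1 / i := by positivity
  have hjj : 0 ≤ 1 / j := by positivity
  have hcpow : ∀ t s : ℝ, 0 < t → 0 ≤ s → (ε ^ (s + 1 / t)) ^ t ≤ ε := by
    intro t s ht hs
    rw [← Real.rpow_mul hε0.le]
    calc ε ^ ((s + 1 / t) * t) ≤ ε ^ (1 : ℝ) := by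
          apply Real.rpow_le_rpow_of_exponent_ge hε0 hε1
          rw [add_mul, one_div_mul_cancel ht.ne']
          nlinarith
      _ = ε := Real.rpow_one _
  refine ⟨ε ^ (1 / i + 1 / j), by positivity, ?_⟩
  intro q hq
  by_contra hcon
  push Not at hcon
  obtain ⟨hcon1, hcon2⟩ := hcon
  have hq0 : (1 : ℝ) ≤ q := by exact_mod_cast hq
  -- choice of the level
  have hex : ∃ n : ℕ, 4 * (q : ℝ) ≤ 2 ^ (n * m) := by
    obtain ⟨n, hn⟩ := pow_unbounded_of_one_lt (4 * (q : ℝ)) (show (1 : ℝ) < 2 by norm_num)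
    refine ⟨n, hn.le.trans (pow_le_pow_right₀ (by norm_num) ?_)⟩
    nlinarith
  classical
  obtain ⟨N, hN, hNmin⟩ : ∃ N : ℕ, 4 * (q : ℝ) ≤ 2 ^ (N * m) ∧
      ∀ k < N, 2 ^ (k * m) < 4 * (q : ℝ) :=
    ⟨Nat.find hex, Nat.find_spec hex, fun k hk => not_le.mp (Nat.find_min hex hk)⟩
  obtain ⟨n, rfl⟩ : ∃ n, N = n + 1 := by
    apply Nat.exists_eq_succ_of_ne_zero
    rintro rfl
    simp at hN; linarith
  have hn := hNmin n (by omega)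
  set t : ℝ := ((n + 1 + 1 : ℕ) : ℝ) * m with ht
  have hQe : (2 : ℝ) ^ t = 2 ^ ((n + 1 + 1) * m) := by
    rw [ht, ← Nat.cast_mul, Real.rpow_natCast]
  have hQ0 : (0 : ℝ) < 2 ^ t := by positivity
  have hQL : (2 : ℝ) ^ t ≤ L * q := by
    rw [hQe, hL_def]
    calc (2 : ℝ) ^ ((n + 1 + 1) * m) = (2 ^ m) ^ 2 * 2 ^ (n * m) := by
          rw [← pow_mul, ← pow_add]; congr 1; ring
      _ ≤ (2 ^ m) ^ 2 * (4 * q) := by gcongr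
      _ = _ := by ring
  have hl1 : ((e (n + 1 + 1) : ℕ) : ℝ) ≤ t * (1 + i) + 1 := by
    have := hule (n + 1 + 1)
    simp only [he_def]
    rw [Nat.cast_add, Nat.cast_mul, ← ht]
    rw [← ht] at this
    linarith
  have hl2 : ((f (n + 1 + 1) : ℕ) : ℝ) ≤ t * (1 + j) + 1 := by
    have h5 := huge (n + 1 + 1)
    rw [← ht] at h5
    have h6 : f (n + 1 + 1) + u (n + 1 + 1) = 2 * ((n + 1 + 1) * m) := by
      have := hunm (n + 1 + 1)
      simp only [hf_def]; omega
    have h7 : ((f (n + 1 + 1) : ℕ) : ℝ) + u (n + 1 + 1) = 2 * t := by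
      rw [ht]; exact_mod_cast h6
    have h8 : t * (1 + j) = 2 * t - t * i := by rw [← eq_sub_iff_add_eq'] at hij; rw [hij]; ring
    linarith
  have hcl1 : 0 < i → |X 0 - (round ((q : ℝ) * X 0) : ℤ) / q| ≤ 1 / 2 ^ e (n + 1 + 1) := by
    intro hi0
    refine coord_close i (X 0) (ε ^ (1 / i + 1 / j)) L (2 ^ t) _ hi0 hi1 (by positivity) hL hQ0
      ?_ q hq hQL (cell_size t i _ hl1) (hcon1 hi0)
    rw [add_comm]
    exact hcpow i _ hi0 hjj
  have hcl2 : 0 < j → |X 1 - (round ((q : ℝ) * X 1) : ℤ) / q| ≤ 1 / 2 ^ f (n + 1 + 1) := by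
    intro hj0
    refine coord_close j (X 1) (ε ^ (1 / i + 1 / j)) L (2 ^ t) _ hj0 hj1 (by positivity) hL hQ0
      ?_ q hq hQL (cell_size t j _ hl2) (hcon2 hj0)
    exact hcpow j _ hj0 hii
  obtain ⟨d1, hd1, hd1'⟩ : ∃ d1 : ℝ, |X 0 - d1| ≤ 1 / 2 ^ e (n + 1 + 1) ∧
      (0 < i → ∃ p : ℤ, d1 = p / q) := by
    by_cases hi0 : 0 < i
    · exact ⟨_, hcl1 hi0, fun _ => ⟨_, rfl⟩⟩
    · exact ⟨X 0, by simp, fun h => absurd h hi0⟩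
  obtain ⟨d2, hd2, hd2'⟩ : ∃ d2 : ℝ, |X 1 - d2| ≤ 1 / 2 ^ f (n + 1 + 1) ∧
      (0 < j → ∃ p : ℤ, d2 = p / q) := by
    by_cases hj0 : 0 < j
    · exact ⟨_, hcl2 hj0, fun _ => ⟨_, rfl⟩⟩
    · exact ⟨X 1, by simp, fun h => absurd h hj0⟩
  have hfin := (hφ (n + 1) (cantorCell φ ω (n + 1)) (ω (n + 1))).2.2 (d1, d2)
    ⟨q, hq, hN, hd1', hd2'⟩
  apply hfin
  have k1 := near_of_close _ _ _ _ (hx (n + 1 + 1)).1 (hx (n + 1 + 1)).2 hd1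
  have k2 := near_of_close _ _ _ _ (hy (n + 1 + 1)).1 (hy (n + 1 + 1)).2 hd2
  exact ⟨k1.1, k1.2, k2.1, k2.2⟩

/-- For any `i, j ≥ 0` with `i + j = 1`, the set `Bad(i,j) ⊆ ℝ²` has Hausdorff dimension `2`. -/
theorem dimH_badPair_eq_two (i j : ℝ) (hi : 0 ≤ i) (hj : 0 ≤ j) (hij : i + j = 1) :
    dimH (badPair i j) = 2 := by
  apply le_antisymm
  · have h := dimH_mono (Set.subset_univ (badPair i j))
    rw [Real.dimH_univ_pi_fin] at h
    exact_mod_cast h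
  · refine le_of_forall_lt fun r hr => ?_
    have hrt : r ≠ ⊤ := (hr.trans (by norm_num)).ne
    have hr2 : r.toReal < 2 := by
      have := (ENNReal.toReal_lt_toReal hrt (by norm_num)).mpr hr
      simpa using this
    have hr0 : 0 ≤ r.toReal := ENNReal.toReal_nonneg
    have h := dimH_badPair_ge i j hi hj hij ((2 - r.toReal) / 2) (by linarith) (by linarith)
    refine lt_of_lt_of_le ?_ h
    rw [ENNReal.lt_ofReal_iff_toReal_lt hrt]
    linarith
end

section
/- For any N-tuple of real numbers i₁,…,i_N ≥ 0 with i₁ + ⋯ + i_N = 1, the set Bad(i₁,…,i_N) ⊆ ℝ^N has Hausdorff dimension N. -/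
open scoped ENNReal

/-- For a tuple of weights `i₁, …, i_N ≥ 0` with `i₁ + ⋯ + i_N = 1`, the set
`Bad(i₁, …, i_N)` of points `x ∈ ℝ^N` for which there exists `c > 0` such that for every
integer `q ≥ 1` one has `max{‖q xᵣ‖^(1/iᵣ) : iᵣ > 0} > c / q`; components with `iᵣ = 0`
impose no condition. -/
def badWeighted {N : ℕ} (i : Fin N → ℝ) : Set (Fin N → ℝ) :=
  {x | ∃ c : ℝ, 0 < c ∧ ∀ q : ℕ, 0 < q →
    ∃ r : Fin N, 0 < i r ∧ c / (q : ℝ) < distToNearestInt ((q : ℝ) * x r) ^ (1 / i r)}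


lemma bw_fiber (t : ℝ) (M : ℕ) :
    (Finset.Icc ⌈t - 2 * M⌉ ⌊t + 2 * (M:ℝ)⌋).card ≤ 4 * M + 1 := by
  rw [Int.card_Icc]
  have h1 := Int.floor_le (t + 2 * (M:ℝ))
  have h2 := Int.le_ceil (t - 2 * (M:ℝ))
  have : (⌊t + 2 * (M:ℝ)⌋ : ℤ) - ⌈t - 2 * (M:ℝ)⌉ ≤ 4 * M := by
    have : ((⌊t + 2 * (M:ℝ)⌋ : ℤ) : ℝ) - (⌈t - 2 * (M:ℝ)⌉ : ℤ) ≤ 4 * M := by linarith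
    exact_mod_cast this
  omega

/-- at most half of the children boxes meet the neighbourhood of a hyperplane. -/
lemma bw_count (N : ℕ) (α : Fin N → ℝ) (β : ℝ) (h : α ≠ 0 ∨ β ≠ 0) (lo : Fin N → ℤ)
    (f : Fin N → ℕ) (m : ℕ) (hf : ∀ r, m ≤ f r) (hm : 2 * (4 * N + 1) ≤ 2 ^ m) :
    2 * ((Fintype.piFinset fun r => Finset.Ico (lo r) (lo r + 2 ^ f r)).filter
      (fun v => |∑ r, α r * (v r : ℝ) - β| ≤ 2 * ∑ r, |α r|)).card ≤
    (Fintype.piFinset fun r => Finset.Ico (lo r) (lo r + 2 ^ f r)).card := by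
  classical
  by_cases ha : α = 0
  · have hb : β ≠ 0 := by
      rcases h with h | h
      · exact absurd ha h
      · exact h
    rw [Finset.filter_false_of_mem]
    · simp
    · intro v _ 
      subst ha
      simp [hb]
  · obtain ⟨r1, hr1⟩ := Function.ne_iff.mp ha
    have : Nonempty (Fin N) := ⟨r1⟩
    obtain ⟨r0, hr0⟩ := Finite.exists_max (fun r => |α r|)
    have h0 : α r0 ≠ 0 := by
      intro h0
      have := hr0 r1
      simp only [h0, abs_zero] at this
      exact hr1 (abs_eq_zero.mp (le_antisymm this (abs_nonneg _)))
    set C := Fintype.piFinset fun r => Finset.Ico (lo r) (lo r + 2 ^ f r) with hC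
    set Bd := C.filter (fun v => |∑ r, α r * (v r : ℝ) - β| ≤ 2 * ∑ r, |α r|) with hBd
    let F : (Fin N → ℤ) → (Fin N → ℤ) := fun v => Function.update v r0 (lo r0)
    have hcard : Bd.card ≤ (4 * N + 1) * (Bd.image F).card := by
      apply Finset.card_le_mul_card_image
      intro a _
      set t : ℝ := (β - ∑ r ∈ Finset.univ.erase r0, α r * (a r : ℝ)) / α r0 with ht
      refine le_trans ?_ (bw_fiber t N)
      apply Finset.card_le_card_of_injOn (fun v => v r0)
      · intro v hv
        simp only [Finset.coe_filter, Set.mem_ofPred_eq, hBd, Finset.mem_filter] at hv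
        obtain ⟨⟨_, hv⟩, hva⟩ := hv
        have hs : ∑ r, |α r| ≤ N * |α r0| := by
          calc ∑ r, |α r| ≤ ∑ r : Fin N, |α r0| := Finset.sum_le_sum fun r _ => hr0 r
            _ = _ := by simp
        have hsplit : ∑ r, α r * (v r : ℝ) - β = α r0 * (v r0 - t) := by
          rw [← Finset.add_sum_erase _ _ (Finset.mem_univ r0)]
          have : ∑ r ∈ Finset.univ.erase r0, α r * (v r : ℝ)
              = ∑ r ∈ Finset.univ.erase r0, α r * (a r : ℝ) := by
            apply Finset.sum_congr rfl
            intro r hr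
            rw [← hva]
            simp [F, Function.update_of_ne (Finset.ne_of_mem_erase hr)]
          rw [this, ht]
          field_simp
          ring
        rw [hsplit, abs_mul] at hv
        have hpos : 0 < |α r0| := abs_pos.mpr h0
        have h3 : |(v r0 : ℝ) - t| ≤ 2 * N := by
          have : |α r0| * |(v r0 : ℝ) - t| ≤ |α r0| * (2 * N) := by nlinarith
          exact le_of_mul_le_mul_left this hpos
        rw [abs_le] at h3
        simp only [Finset.coe_Icc, Set.mem_Icc]
        constructor
        · apply Int.ceil_le.mpr; linarith
        · apply Int.le_floor.mpr; linarith
      · intro v hv w hw hvw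
        simp only [Finset.coe_filter, Set.mem_ofPred_eq] at hv hw
        have := hv.2.trans hw.2.symm
        funext r
        by_cases hr : r = r0
        · subst hr; exact hvw
        · have := congrFun this r
          simpa [F, Function.update_of_ne hr] using this
    have himg : (Bd.image F).card * 2 ^ m ≤ C.card := by
      have hsub : Bd.image F ⊆ Fintype.piFinset (fun r => if r = r0 then {lo r0} else
          Finset.Ico (lo r) (lo r + 2 ^ f r)) := by
        intro w hw
        obtain ⟨v, hv, rfl⟩ := Finset.mem_image.mp hw
        have hv := (Finset.mem_filter.mp hv).1
        rw [hC, Fintype.mem_piFinset] at hv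
        rw [Fintype.mem_piFinset]
        intro r
        by_cases hr : r = r0
        · subst hr; simp [F]
        · simpa [F, hr] using hv r
      have h1 := Finset.card_le_card hsub
      rw [Fintype.card_piFinset, ← Finset.mul_prod_erase _ _ (Finset.mem_univ r0)] at h1
      rw [hC, Fintype.card_piFinset, ← Finset.mul_prod_erase _ _ (Finset.mem_univ r0)]
      have h2 : ∏ r ∈ Finset.univ.erase r0, (if r = r0 then {lo r0} else
          Finset.Ico (lo r) (lo r + 2 ^ f r)).card =
          ∏ r ∈ Finset.univ.erase r0, (Finset.Ico (lo r) (lo r + 2 ^ f r)).card := by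
        apply Finset.prod_congr rfl
        intro r hr
        simp [Finset.ne_of_mem_erase hr]
      rw [h2] at h1
      simp only [if_true, Finset.card_singleton, one_mul] at h1
      rw [mul_comm]
      apply Nat.mul_le_mul _ h1
      rw [Int.card_Ico]
      have : (2:ℕ) ^ m ≤ 2 ^ f r0 := Nat.pow_le_pow_right (by norm_num) (hf r0)
      have h5 : ((2:ℤ) ^ f r0) = ((2 ^ f r0 : ℕ) : ℤ) := by push_cast; rfl
      rw [add_sub_cancel_left, h5, Int.toNat_natCast]
      exact this
    calc 2 * Bd.card ≤ 2 * ((4 * N + 1) * (Bd.image F).card) := by omega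
      _ = (2 * (4 * N + 1)) * (Bd.image F).card := by ring
      _ ≤ 2 ^ m * (Bd.image F).card := Nat.mul_le_mul_right _ hm
      _ ≤ C.card := by rw [mul_comm]; exact himg

/-- Abstract tree lemma. -/
lemma bw_tree {A I : Type*} (g : ℕ → ℝ≥0∞) (P : ℕ → A → A) (G : ℕ → A → Finset A)
    (hGP : ∀ n u, ∀ v ∈ G n u, P n v = u)
    (hGc : ∀ n u, g n ≤ g (n + 1) * (G n u).card)
    (κ : I → ℕ) (D : ℕ → I → A) (hD : ∀ n j, n < κ j → P n (D (n + 1) j) = D n j)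
    (hsum : ∑' j, g (κ j) < g 0) (u0 : A) :
    ∃ u : ℕ → A, (∀ n, u (n + 1) ∈ G n (u n)) ∧ ∀ j, u (κ j) ≠ D (κ j) j := by
  classical
  let Ψ : ℕ → A → ℝ≥0∞ := fun n u => ∑' j, if n ≤ κ j ∧ D n j = u then g (κ j) else 0
  have step : ∀ n u, Ψ n u < g n → ∃ v ∈ G n u, Ψ (n + 1) v < g (n + 1) := by
    intro n u h
    by_contra hcon
    push Not at hcon
    have h1 : g (n + 1) * (G n u).card ≤ ∑ v ∈ G n u, Ψ (n + 1) v := by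
      rw [mul_comm, ← nsmul_eq_mul]
      exact Finset.card_nsmul_le_sum _ _ _ hcon
    have h2 : ∑ v ∈ G n u, Ψ (n + 1) v ≤ Ψ n u := by
      simp only [Ψ]
      rw [← Summable.tsum_finsetSum (fun _ _ => ENNReal.summable)]
      apply ENNReal.tsum_le_tsum
      intro j
      by_cases hj : n + 1 ≤ κ j
      · simp only [hj, true_and]
        rw [Finset.sum_ite_eq]
        split_ifs with h3 h4 h4
        · exact le_rfl
        · exfalso
          apply h4
          refine ⟨by omega, ?_⟩
          rw [← hD n j (by omega)]
          exact hGP n u _ h3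
        · exact zero_le
        · exact le_rfl
      · simp [hj]
    exact absurd ((hGc n u).trans (h1.trans h2)) (not_le.mpr h)
  have h0 : Ψ 0 u0 < g 0 := by
    refine lt_of_le_of_lt ?_ hsum
    apply ENNReal.tsum_le_tsum
    intro j
    split_ifs <;> simp
  choose! nx hnx1 hnx2 using step
  let u : ℕ → A := fun n => Nat.rec u0 (fun n v => nx n v) n
  have hu : ∀ n, Ψ n (u n) < g n := by
    intro n
    induction n with
    | zero => exact h0
    | succ n ih => exact hnx2 n _ ih
  refine ⟨u, fun n => hnx1 n _ (hu n), ?_⟩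
  intro j hj
  have := hu (κ j)
  have h2 : g (κ j) ≤ Ψ (κ j) (u (κ j)) := by
    simp only [Ψ]
    refine le_trans ?_ (ENNReal.le_tsum j)
    simp [hj]
  exact absurd h2 (not_le.mpr this)

/-- simplex lemma -/
lemma bw_simplex {ι : Type*} [Fintype ι] [DecidableEq ι] (V : Set (Option ι → ℤ))
    (x0 w : ι → ℝ) (Q : ℝ)
    (hV : ∀ v ∈ V, |(v none : ℝ)| ≤ Q ∧
      ∀ r, |(v (some r) : ℝ) - x0 r * v none| ≤ Q * w r)
    (hvol : ((Fintype.card ι + 1).factorial : ℝ) * (Q ^ (Fintype.card ι + 1) * ∏ r, w r) < 1) :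
    ∃ (a : ι → ℝ) (b : ℝ), (a ≠ 0 ∨ b ≠ 0) ∧
      ∀ v ∈ V, ∑ r, a r * (v (some r) : ℝ) = b * v none := by
  classical
  let T : (Option ι → ℤ) → (Option ι → ℝ) := fun v j => (v j : ℝ)
  by_cases hspan : Submodule.span ℝ (T '' V) = ⊤
  · exfalso
    obtain ⟨κ, a, ha, hb1, hb2⟩ := exists_linearIndependent' ℝ (fun v : V => T v)
    have hr : Set.range (fun v : V => T v) = T '' V := by ext; simp
    rw [hr, hspan] at hb1
    let bas := Module.Basis.mk hb2 (by rw [hb1])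
    have : Finite κ := Module.Finite.finite_basis bas
    have : Fintype κ := Fintype.ofFinite κ
    have hc : Fintype.card κ = Fintype.card (Option ι) := by
      rw [← Module.finrank_eq_card_basis bas]; simp
    let eq := Fintype.equivOfCardEq hc
    let M : Matrix (Option ι) (Option ι) ℤ := fun j => (a (eq.symm j) : Option ι → ℤ)
    have hdet : (M.map (Int.cast : ℤ → ℝ)).det ≠ 0 := by
      have : LinearIndependent ℝ (M.map (Int.cast : ℤ → ℝ)).row := by
        have := hb2.comp eq.symm eq.symm.injective
        exact this
      rw [Matrix.linearIndependent_rows_iff_isUnit] at this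
      exact ((Matrix.isUnit_iff_isUnit_det _).mp this).ne_zero
    have hdet1 : (1:ℝ) ≤ |(M.map (Int.cast : ℤ → ℝ)).det| := by
      have h1 : (M.map (Int.cast : ℤ → ℝ)).det = (M.det : ℝ) := by
        exact ((Int.castRingHom ℝ).map_det M).symm
      rw [h1] at hdet ⊢
      have : M.det ≠ 0 := by exact_mod_cast hdet
      exact_mod_cast Int.one_le_abs this
    let B : Matrix (Option ι) (Option ι) ℝ := fun j c =>
      (M j c : ℝ) - (c.elim 0 x0) * (M j none : ℝ)
    have hB : B.det = (M.map (Int.cast : ℤ → ℝ)).det := by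
      rw [← Matrix.det_transpose B, ← Matrix.det_transpose (M.map _)]
      apply Matrix.det_eq_of_forall_row_eq_smul_add_const (fun c => - (c.elim 0 x0)) none (by simp)
      intro c j
      change (M j c : ℝ) - (c.elim 0 x0) * (M j none : ℝ) = (M j c : ℝ) + -(c.elim 0 x0) * (M j none : ℝ)
      ring
    have hBb : |B.det| ≤ ((Fintype.card ι + 1).factorial : ℝ) *
        (Q ^ (Fintype.card ι + 1) * ∏ r, w r) := by
      rw [Matrix.det_apply]
      refine (Finset.abs_sum_le_sum_abs _ _).trans ?_
      have : ∀ σ : Equiv.Perm (Option ι), |Equiv.Perm.sign σ • ∏ j, B (σ j) j| ≤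
          Q ^ (Fintype.card ι + 1) * ∏ r, w r := by
        intro σ
        have h1 : |Equiv.Perm.sign σ • ∏ j, B (σ j) j| = ∏ j, |B (σ j) j| := by
          rw [← Finset.abs_prod]
          rcases Int.units_eq_one_or (Equiv.Perm.sign σ) with h | h <;> simp [h]
        rw [h1]
        calc ∏ j, |B (σ j) j| ≤ ∏ j : Option ι, Q * (j.elim 1 w) := by
              apply Finset.prod_le_prod
              · intros; positivity
              · intro j _
                have := hV _ (a (eq.symm (σ j))).2
                cases j with
                | none => simpa [B, M] using this.1
                | some r => simpa [B, M] using this.2 r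
          _ = _ := by
            rw [Finset.prod_mul_distrib]
            simp [Fintype.prod_option]
      refine (Finset.sum_le_card_nsmul _ _ _ (fun σ _ => this σ)).trans ?_
      rw [nsmul_eq_mul, Finset.card_univ, Fintype.card_perm, Fintype.card_option]
    rw [hB] at hBb
    linarith
  · obtain ⟨f, hf0, hf⟩ := Submodule.exists_le_ker_of_lt_top _ (lt_top_iff_ne_top.mpr hspan)
    have hfx : ∀ x : Option ι → ℝ, f x = ∑ j, x j * f (Pi.single j 1) := by
      intro x
      conv_lhs => rw [pi_eq_sum_univ' x]
      simp [map_sum]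
    refine ⟨fun r => f (Pi.single (some r) 1), - f (Pi.single none 1), ?_, ?_⟩
    · by_contra hcon
      push Not at hcon
      apply hf0
      apply LinearMap.ext
      intro x
      rw [hfx, Fintype.sum_option]
      have h2 : f (Pi.single none 1) = 0 := by simpa using hcon.2
      have h3 : ∀ r, f (Pi.single (some r) 1) = 0 := fun r => congrFun hcon.1 r
      simp [h2, h3]
    · intro v hv
      have h1 : f (T v) = 0 := hf (Submodule.subset_span ⟨v, hv, rfl⟩)
      rw [hfx, Fintype.sum_option] at h1
      simp only [T] at h1
      have : ∑ r, f (Pi.single (some r) 1) * (v (some r) : ℝ) =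
        ∑ r, (v (some r) : ℝ) * f (Pi.single (some r) 1) := by
        apply Finset.sum_congr rfl; intros; ring
      rw [this]
      linarith

/-- exponents of the side lengths of the boxes -/
noncomputable def bwE {N : ℕ} (m : ℕ) (i : Fin N → ℝ) (k : ℕ) (r : Fin N) : ℕ :=
  ⌊(k : ℝ) * m * (1 + i r)⌋₊

lemma bwE_zero {N : ℕ} (m : ℕ) (i : Fin N → ℝ) (r : Fin N) : bwE m i 0 r = 0 := by
  simp [bwE]

lemma bwE_le {N : ℕ} (m : ℕ) (i : Fin N → ℝ) (hi : ∀ r, 0 ≤ i r) (k : ℕ) (r : Fin N) :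
    (2 : ℝ) ^ bwE m i k r ≤ (2 : ℝ) ^ ((k : ℝ) * m * (1 + i r)) := by
  rw [← Real.rpow_natCast]
  apply Real.rpow_le_rpow_of_exponent_le (by norm_num)
  have := hi r
  exact Nat.floor_le (by positivity)

lemma bwE_ge {N : ℕ} (m : ℕ) (i : Fin N → ℝ) (k : ℕ) (r : Fin N) :
    (2 : ℝ) ^ ((k : ℝ) * m * (1 + i r)) ≤ 2 * (2 : ℝ) ^ bwE m i k r := by
  rw [← pow_succ', ← Real.rpow_natCast]
  apply Real.rpow_le_rpow_of_exponent_le (by norm_num)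
  push_cast
  exact (Nat.lt_floor_add_one _).le

lemma bwE_step {N : ℕ} (m : ℕ) (i : Fin N → ℝ) (hi : ∀ r, 0 ≤ i r) (k : ℕ) (r : Fin N) :
    bwE m i k r + m ≤ bwE m i (k + 1) r := by
  unfold bwE
  have := hi r
  rw [← Nat.floor_add_natCast (by positivity)]
  apply Nat.floor_le_floor
  push_cast
  have : 0 ≤ (m : ℝ) * i r := by positivity
  nlinarith

lemma bwE_mono {N : ℕ} (m : ℕ) (i : Fin N → ℝ) (hi : ∀ r, 0 ≤ i r) (r : Fin N) :
    Monotone (fun k => bwE m i k r) :=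
  monotone_nat_of_le_succ fun k => (Nat.le_add_right _ _).trans (bwE_step m i hi k r)

lemma bw_danger {N : ℕ} (m : ℕ) (i : Fin N → ℝ) (hi : ∀ r, 0 ≤ i r) (r : Fin N) (hi1 : i r ≤ 1)
    (K c : ℝ) (hK : 1 ≤ K) (hc : 0 < c) (hci : c ^ i r * ((K * 2 ^ m) ^ 2 * 2 ^ (2 * m)) ≤ 1)
    (n q : ℕ) (hq : 0 < q) (hw : (2 : ℝ) ^ (m * n) ≤ K * q * 2 ^ m) :
    (c / q) ^ i r * 2 ^ bwE m i (n + 1) r ≤ q := by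
  have hq' : (0 : ℝ) < q := by exact_mod_cast hq
  have h0 := hi r
  set X : ℝ := (2 : ℝ) ^ ((n : ℝ) * m * (1 + i r)) with hX
  have hX0 : 0 < X := by positivity
  have h1 : X ≤ (K * 2 ^ m) ^ 2 * (q : ℝ) ^ (1 + i r) := by
    have e1 : X = ((2 : ℝ) ^ (m * n)) ^ (1 + i r) := by
      rw [← Real.rpow_natCast, ← Real.rpow_mul (by norm_num), hX]
      push_cast; ring_nf
    have e2 : K * q * 2 ^ m = (K * 2 ^ m) * q := by ring
    rw [e1]
    calc ((2 : ℝ) ^ (m * n)) ^ (1 + i r) ≤ ((K * 2 ^ m) * q) ^ (1 + i r) := by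
          rw [← e2]; exact Real.rpow_le_rpow (by positivity) hw (by positivity)
      _ = (K * 2 ^ m) ^ (1 + i r) * (q : ℝ) ^ (1 + i r) :=
          Real.mul_rpow (by positivity) (by positivity)
      _ ≤ _ := by
          gcongr
          rw [← Real.rpow_natCast (K * 2 ^ m) 2]
          apply Real.rpow_le_rpow_of_exponent_le
          · have : (1 : ℝ) ≤ 2 ^ m := one_le_pow₀ (by norm_num)
            nlinarith
          · push_cast; linarith
  have h2 : (2 : ℝ) ^ bwE m i (n + 1) r ≤ X * 2 ^ (2 * m) := by
    refine (bwE_le m i hi (n + 1) r).trans ?_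
    rw [hX, ← Real.rpow_natCast, ← Real.rpow_add (by norm_num)]
    apply Real.rpow_le_rpow_of_exponent_le (by norm_num)
    push_cast
    have : (m : ℝ) * i r ≤ m := by
      have : (0 : ℝ) ≤ m := by positivity
      nlinarith
    nlinarith
  rw [Real.div_rpow hc.le hq'.le]
  have h3 : (q : ℝ) ^ (1 + i r) = q * (q : ℝ) ^ i r := by
    rw [Real.rpow_add hq', Real.rpow_one]
  have hqi : 0 < (q : ℝ) ^ i r := by positivity
  rw [div_mul_eq_mul_div, div_le_iff₀ hqi, ← h3]
  calc c ^ i r * 2 ^ bwE m i (n + 1) r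
      ≤ c ^ i r * (((K * 2 ^ m) ^ 2 * (q : ℝ) ^ (1 + i r)) * 2 ^ (2 * m)) := by
        gcongr
        exact h2.trans (by gcongr)
    _ = (c ^ i r * ((K * 2 ^ m) ^ 2 * 2 ^ (2 * m))) * (q : ℝ) ^ (1 + i r) := by ring
    _ ≤ 1 * (q : ℝ) ^ (1 + i r) := by gcongr
    _ = _ := one_mul _

lemma bw_vol {N : ℕ} (m : ℕ) (i : Fin N → ℝ) (hi : ∀ r, 0 ≤ i r) (hsum : ∑ r, i r = 1) (n : ℕ) :
    ((Fintype.card {r // 0 < i r} + 1).factorial : ℝ) *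
      (((2 : ℝ) ^ (m * n) / (4 ^ (N + 1) * (N + 1).factorial)) ^ (Fintype.card {r // 0 < i r} + 1) *
      ∏ r : {r // 0 < i r}, (2 / (2 : ℝ) ^ bwE m i n r.1)) < 1 := by
  set d := Fintype.card {r // 0 < i r} with hd
  have hdN : d ≤ N := by
    have := Fintype.card_subtype_le (fun r : Fin N => 0 < i r)
    simpa using this
  have hs : ∑ r : {r // 0 < i r}, i r.1 = 1 := by
    rw [← hsum, ← Fintype.sum_subtype_add_sum_subtype (fun r => 0 < i r) i]
    have : ∑ r : {r // ¬ 0 < i r}, i r.1 = 0 := by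
      apply Finset.sum_eq_zero
      intro r _
      exact le_antisymm (not_lt.mp r.2) (hi r.1)
    rw [this, add_zero]
  set K : ℝ := 4 ^ (N + 1) * (N + 1).factorial with hK
  have hfac : (1 : ℝ) ≤ (N + 1).factorial := by exact_mod_cast Nat.succ_le_of_lt (Nat.factorial_pos _)
  have h4 : (1 : ℝ) ≤ 4 ^ (N + 1) := one_le_pow₀ (by norm_num)
  have hK1 : 1 ≤ K := by nlinarith
  have hprod : ∏ r : {r // 0 < i r}, (2 / (2 : ℝ) ^ bwE m i n r.1) ≤
      4 ^ d / ((2 : ℝ) ^ (m * n)) ^ (d + 1) := by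
    calc ∏ r : {r // 0 < i r}, (2 / (2 : ℝ) ^ bwE m i n r.1)
        ≤ ∏ r : {r // 0 < i r}, (4 / (2 : ℝ) ^ ((n : ℝ) * m * (1 + i r.1))) := by
          apply Finset.prod_le_prod
          · intros; positivity
          · intro r _
            rw [div_le_div_iff₀ (by positivity) (by positivity)]
            have := bwE_ge m i n r.1
            linarith
      _ = _ := by
          rw [Finset.prod_div_distrib, Finset.prod_const, Finset.card_univ, ← hd]
          congr 1
          rw [← Real.rpow_sum_of_pos (by norm_num), ← Finset.mul_sum, Finset.sum_add_distrib, hs]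
          rw [← pow_mul, ← Real.rpow_natCast]
          congr 1
          simp only [Finset.sum_const, Finset.card_univ, ← hd, nsmul_eq_mul]
          push_cast
          ring
  set Y : ℝ := (2 : ℝ) ^ (m * n) with hY
  have hY0 : 0 < Y := by positivity
  calc ((d + 1).factorial : ℝ) * ((Y / K) ^ (d + 1) * ∏ r : {r // 0 < i r}, (2 / (2 : ℝ) ^ bwE m i n r.1))
      ≤ ((d + 1).factorial : ℝ) * ((Y / K) ^ (d + 1) * (4 ^ d / Y ^ (d + 1))) := by gcongr
    _ = ((d + 1).factorial : ℝ) * 4 ^ d / K ^ (d + 1) := by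
        rw [div_pow]; field_simp
    _ < 1 := by
        rw [div_lt_one (by positivity)]
        calc ((d + 1).factorial : ℝ) * 4 ^ d ≤ (N + 1).factorial * 4 ^ N := by
              gcongr
              norm_num
          _ < K := by
              rw [hK, pow_succ]
              have : (0 : ℝ) < 4 ^ N := by positivity
              nlinarith
          _ ≤ K ^ (d + 1) := le_self_pow₀ hK1 (by omega)

lemma bw_key {N : ℕ} (m : ℕ) (hm : 2 * (4 * N + 1) ≤ 2 ^ m) (i : Fin N → ℝ) (hi : ∀ r, 0 ≤ i r)
    (hsum : ∑ r, i r = 1) (K c : ℝ) (hK : K = 4 ^ (N + 1) * (N + 1).factorial) (hc : 0 < c)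
    (hci : ∀ r, 0 < i r → c ^ i r * ((K * 2 ^ m) ^ 2 * 2 ^ (2 * m)) ≤ 1) (n : ℕ) (u : Fin N → ℤ) :
    ∃ G : Finset (Fin N → ℤ),
      (∀ v ∈ G, ∀ r, v r / 2 ^ (bwE m i (n + 1) r - bwE m i n r) = u r) ∧
      2 ^ (∑ r, bwE m i (n + 1) r) ≤ 2 * G.card * 2 ^ (∑ r, bwE m i n r) ∧
      ∀ v ∈ G, ∀ x : Fin N → ℝ,
        (∀ r, (v r : ℝ) ≤ x r * 2 ^ bwE m i (n + 1) r ∧ x r * 2 ^ bwE m i (n + 1) r ≤ v r + 1) →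
        ∀ q : ℕ, 0 < q → (2 : ℝ) ^ (m * n) ≤ K * q * 2 ^ m → K * q < (2 : ℝ) ^ (m * n) →
        ∃ r, 0 < i r ∧ c / (q : ℝ) < distToNearestInt ((q : ℝ) * x r) ^ (1 / i r) := by
  classical
  have hfac : (1 : ℝ) ≤ (N + 1).factorial := by exact_mod_cast Nat.succ_le_of_lt (Nat.factorial_pos _)
  have h4 : (1 : ℝ) ≤ 4 ^ (N + 1) := one_le_pow₀ (by norm_num)
  have hK1 : 1 ≤ K := by rw [hK]; nlinarith
  have hi1 : ∀ r, i r ≤ 1 := by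
    intro r
    rw [← hsum]
    exact Finset.single_le_sum (fun r _ => hi r) (Finset.mem_univ r)
  set f : Fin N → ℕ := fun r => bwE m i (n + 1) r - bwE m i n r with hf
  have hfE : ∀ r, bwE m i (n + 1) r = bwE m i n r + f r := by
    intro r
    have := bwE_step m i hi n r
    simp only [hf]; omega
  have hfm : ∀ r, m ≤ f r := by
    intro r
    have := bwE_step m i hi n r
    simp only [hf]; omega
  set V : Set (Option {r // 0 < i r} → ℤ) := {z | 0 < z none ∧ K * z none < (2 : ℝ) ^ (m * n) ∧
    ∀ r, |(z (some r) : ℝ) - (u r.1 / (2 : ℝ) ^ bwE m i n r.1) * z none| ≤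
      z none * (2 / (2 : ℝ) ^ bwE m i n r.1)} with hV
  obtain ⟨a, b, hab, hvan⟩ := bw_simplex V (fun r => u r.1 / (2 : ℝ) ^ bwE m i n r.1)
    (fun r => 2 / (2 : ℝ) ^ bwE m i n r.1)
    ((2 : ℝ) ^ (m * n) / K) (by
      rintro z ⟨hz0, hzK, hz⟩
      have hz0' : (0 : ℝ) < z none := by exact_mod_cast hz0
      have hzQ : (z none : ℝ) ≤ (2 : ℝ) ^ (m * n) / K := by
        rw [le_div_iff₀ (by positivity)]; linarith
      refine ⟨by rw [abs_of_pos hz0']; exact hzQ, fun r => (hz r).trans ?_⟩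
      gcongr) (by rw [hK]; exact bw_vol m i hi hsum n)
  let a' : Fin N → ℝ := fun r => if h : 0 < i r then a ⟨r, h⟩ else 0
  have hsuma : ∀ z : Fin N → ℝ, ∑ r, a' r * z r = ∑ r : {r // 0 < i r}, a r * z r.1 := by
    intro z
    rw [← Fintype.sum_subtype_add_sum_subtype (fun r => 0 < i r) (fun r => a' r * z r)]
    have : ∑ r : {r // ¬ 0 < i r}, a' r.1 * z r.1 = 0 := by
      apply Finset.sum_eq_zero
      intro r _
      simp [a', r.2]
    rw [this, add_zero]
    apply Finset.sum_congr rfl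
    intro r _
    simp [a', r.2]
  let α : Fin N → ℝ := fun r => a' r / 2 ^ bwE m i (n + 1) r
  have hαb : α ≠ 0 ∨ b ≠ 0 := by
    rcases hab with h | h
    · left
      intro hα
      apply h
      funext r
      have := congrFun hα r.1
      simpa [α, a', r.2] using this
    · right; exact h
  have hcount := bw_count N α b hαb (fun r => u r * 2 ^ f r) f m hfm hm
  set C := Fintype.piFinset fun r => Finset.Ico (u r * 2 ^ f r) (u r * 2 ^ f r + 2 ^ f r) with hC
  have hmemC : ∀ v ∈ C, ∀ r, u r * 2 ^ f r ≤ v r ∧ v r < u r * 2 ^ f r + 2 ^ f r := by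
    intro v hv r
    have := Fintype.mem_piFinset.mp hv r
    exact Finset.mem_Ico.mp this
  refine ⟨C.filter (fun v => ¬ |∑ r, α r * (v r : ℝ) - b| ≤ 2 * ∑ r, |α r|), ?_, ?_, ?_⟩
  · intro v hv r
    have hv := hmemC v (Finset.mem_filter.mp hv).1 r
    change v r / 2 ^ f r = u r
    rw [Int.ediv_eq_iff_of_pos (by positivity)]
    constructor <;> linarith [hv.1, hv.2]
  · have h1 := Finset.card_filter_add_card_filter_not (s := C)
      (fun v => |∑ r, α r * (v r : ℝ) - b| ≤ 2 * ∑ r, |α r|)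
    have h2 : C.card = 2 ^ (∑ r, f r) := by
      rw [hC, Fintype.card_piFinset, ← Finset.prod_pow_eq_pow_sum]
      apply Finset.prod_congr rfl
      intro r _
      rw [Int.card_Ico, add_sub_cancel_left]
      have h5 : ((2:ℤ) ^ f r) = ((2 ^ f r : ℕ) : ℤ) := by push_cast; rfl
      rw [h5, Int.toNat_natCast]
    have h3 : ∑ r, bwE m i (n + 1) r = ∑ r, f r + ∑ r, bwE m i n r := by
      rw [← Finset.sum_add_distrib]
      apply Finset.sum_congr rfl
      intro r _
      rw [hfE r]; ring
    rw [h3, pow_add, ← h2]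
    apply Nat.mul_le_mul_right
    omega
  · intro v hv x hx q hq hw1 hw2
    obtain ⟨hvC, hvb⟩ := Finset.mem_filter.mp hv
    have hq' : (0 : ℝ) < q := by exact_mod_cast hq
    by_contra hcon
    push Not at hcon
    apply hvb
    have hE' : ∀ r, (2 : ℝ) ^ bwE m i (n + 1) r = 2 ^ bwE m i n r * 2 ^ f r := by
      intro r; rw [hfE r, pow_add]
    have hclose : ∀ r, 0 < i r →
        |(q : ℝ) * x r - round ((q : ℝ) * x r)| * 2 ^ bwE m i (n + 1) r ≤ q := by
      intro r hr
      have h1 := hcon r hr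
      have h2 : distToNearestInt ((q : ℝ) * x r) ≤ (c / q) ^ i r := by
        have h0 : 0 ≤ distToNearestInt ((q : ℝ) * x r) := abs_nonneg _
        have := Real.rpow_le_rpow (by positivity) h1 (hi r)
        rwa [← Real.rpow_mul h0, one_div_mul_cancel hr.ne', Real.rpow_one] at this
      refine le_trans ?_ (bw_danger m i hi r (hi1 r) K c hK1 hc (hci r hr) n q hq hw1)
      gcongr
      exact h2
    let z : Option {r // 0 < i r} → ℤ := fun o => o.elim (q : ℤ) (fun r => round ((q : ℝ) * x r.1))
    have hz : z ∈ V := by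
      refine ⟨by simpa [z] using hq, by simpa [z] using hw2, ?_⟩
      intro r
      have hr := hclose r.1 r.2
      have hL : (0 : ℝ) < 2 ^ bwE m i n r.1 := by positivity
      have hF : (1 : ℝ) ≤ 2 ^ f r.1 := one_le_pow₀ (by norm_num)
      obtain ⟨hv1, hv2⟩ := hmemC v hvC r.1
      have hv1' : (u r.1 : ℝ) * 2 ^ f r.1 ≤ v r.1 := by exact_mod_cast hv1
      have hv2' : (v r.1 : ℝ) + 1 ≤ u r.1 * 2 ^ f r.1 + 2 ^ f r.1 := by
        exact_mod_cast Int.add_one_le_iff.mpr hv2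
      obtain ⟨hx1, hx2⟩ := hx r.1
      rw [hE'] at hx1 hx2 hr
      have hF0 : (0 : ℝ) < 2 ^ f r.1 := by positivity
      have e1 : (u r.1 : ℝ) ≤ x r.1 * 2 ^ bwE m i n r.1 := by
        apply le_of_mul_le_mul_right _ hF0; linarith
      have e2 : x r.1 * 2 ^ bwE m i n r.1 ≤ u r.1 + 1 := by
        apply le_of_mul_le_mul_right _ hF0; linarith
      have e3 : |(q : ℝ) * x r.1 - round ((q : ℝ) * x r.1)| * 2 ^ bwE m i n r.1 ≤ q := by
        refine le_trans ?_ hr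
        rw [← mul_assoc]
        apply le_mul_of_one_le_right (by positivity) hF
      simp only [z, Option.elim]
      push_cast
      generalize (round ((q : ℝ) * x r.1) : ℤ) = p at *
      generalize (2 : ℝ) ^ bwE m i n r.1 = L at *
      rw [← mul_le_mul_iff_left₀ hL, ← abs_of_pos hL, ← abs_mul, abs_of_pos hL]
      rw [← abs_of_pos hL, ← abs_mul, abs_le] at e3
      have e4 : ((p : ℝ) - u r.1 / L * q) * L = p * L - u r.1 * q := by field_simp
      have e5 : (q : ℝ) * (2 / L) * L = 2 * q := by field_simp
      rw [e4, e5, abs_le]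
      constructor <;> nlinarith
    have hzv := hvan z hz
    simp only [z, Option.elim] at hzv
    push_cast at hzv
    rw [← hsuma (fun r => ((round ((q : ℝ) * x r) : ℤ) : ℝ))] at hzv
    have hterm : ∀ r, |a' r * ((q : ℝ) * v r / 2 ^ bwE m i (n + 1) r -
        round ((q : ℝ) * x r))| ≤ q * (2 * |α r|) := by
      intro r
      by_cases hr : 0 < i r
      · have h1 := hclose r hr
        obtain ⟨hx1, hx2⟩ := hx r
        have hL : (0 : ℝ) < 2 ^ bwE m i (n + 1) r := by positivity
        simp only [α]
        generalize (round ((q : ℝ) * x r) : ℤ) = p at *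
        generalize (2 : ℝ) ^ bwE m i (n + 1) r = L at *
        rw [abs_mul, abs_div, abs_of_pos hL]
        have : |(q : ℝ) * v r / L - p| ≤ q * 2 / L := by
          rw [le_div_iff₀ hL, ← abs_of_pos hL, ← abs_mul, abs_of_pos hL]
          have e4 : ((q : ℝ) * v r / L - p) * L = q * v r - p * L := by field_simp
          rw [← abs_of_pos hL, ← abs_mul, abs_le] at h1
          rw [e4, abs_le]
          constructor <;> nlinarith
        calc |a' r| * |(q : ℝ) * v r / L - p| ≤ |a' r| * (q * 2 / L) := by gcongr
          _ = _ := by ring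
      · simp [a', α, hr]
    have hfin : (q : ℝ) * |∑ r, α r * (v r : ℝ) - b| ≤ q * (2 * ∑ r, |α r|) := by
      rw [← abs_of_pos hq', ← abs_mul, abs_of_pos hq']
      have e : (q : ℝ) * (∑ r, α r * (v r : ℝ) - b) =
          ∑ r, a' r * ((q : ℝ) * v r / 2 ^ bwE m i (n + 1) r - round ((q : ℝ) * x r)) := by
        rw [mul_sub, mul_comm (q : ℝ) b, ← hzv, Finset.mul_sum, ← Finset.sum_sub_distrib]
        apply Finset.sum_congr rfl
        intro r _
        simp only [α]
        ring
      rw [e]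
      refine (Finset.abs_sum_le_sum_abs _ _).trans ?_
      rw [Finset.mul_sum, Finset.mul_sum]
      exact Finset.sum_le_sum fun r _ => hterm r
    exact le_of_mul_le_mul_left hfin hq'

/-- the closed box with index `u` at level `k` -/
def bwBox {N : ℕ} (m : ℕ) (i : Fin N → ℝ) (k : ℕ) (u : Fin N → ℤ) : Set (Fin N → ℝ) :=
  {x | ∀ r, (u r : ℝ) ≤ x r * 2 ^ bwE m i k r ∧ x r * 2 ^ bwE m i k r ≤ u r + 1}

lemma bwBox_eq {N : ℕ} (m : ℕ) (i : Fin N → ℝ) (k : ℕ) (u : Fin N → ℤ) :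
    bwBox m i k u = Set.Icc (fun r => (u r : ℝ) / 2 ^ bwE m i k r)
      (fun r => ((u r : ℝ) + 1) / 2 ^ bwE m i k r) := by
  ext x
  rw [Set.mem_Icc, Pi.le_def, Pi.le_def, ← forall_and]
  apply forall_congr'
  intro r
  rw [div_le_iff₀ (by positivity), le_div_iff₀ (by positivity)]

lemma bwBox_nonempty {N : ℕ} (m : ℕ) (i : Fin N → ℝ) (k : ℕ) (u : Fin N → ℤ) :
    (bwBox m i k u).Nonempty := by
  rw [bwBox_eq, Set.nonempty_Icc]
  intro r
  simp only
  gcongr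
  linarith

lemma bwBox_subset {N : ℕ} (m : ℕ) (i : Fin N → ℝ) (hi : ∀ r, 0 ≤ i r) (k : ℕ) (u v : Fin N → ℤ)
    (h : ∀ r, v r / 2 ^ (bwE m i (k + 1) r - bwE m i k r) = u r) :
    bwBox m i (k + 1) v ⊆ bwBox m i k u := by
  intro x hx r
  obtain ⟨h1, h2⟩ := hx r
  have hstep := bwE_step m i hi k r
  have hr := h r
  rw [Int.ediv_eq_iff_of_pos (by positivity)] at hr
  obtain ⟨g, hg⟩ : ∃ g, bwE m i (k + 1) r = bwE m i k r + g := ⟨bwE m i (k + 1) r - bwE m i k r, by omega⟩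
  have hg' : bwE m i (k + 1) r - bwE m i k r = g := by omega
  rw [hg'] at hr
  rw [hg, pow_add] at h1 h2
  have hF0 : (0 : ℝ) < 2 ^ g := by positivity
  have e1 : (u r : ℝ) * 2 ^ g ≤ v r := by exact_mod_cast (by linarith [hr.1] : u r * 2 ^ g ≤ v r)
  have e2 : (v r : ℝ) + 1 ≤ (u r + 1) * 2 ^ g := by
    exact_mod_cast (by linarith [Int.add_one_le_iff.mpr hr.2] : v r + 1 ≤ (u r + 1) * 2 ^ g)
  constructor
  · apply le_of_mul_le_mul_right _ hF0; linarith
  · apply le_of_mul_le_mul_right _ hF0; linarith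

lemma bw_cells {N : ℕ} (m : ℕ) (i : Fin N → ℝ) (hi : ∀ r, 0 ≤ i r) (k : ℕ)
    (U : Set (Fin N → ℝ)) (hU : U.Nonempty)
    (hd : Metric.ediam U ≤ ENNReal.ofReal (((1 / 2 : ℝ) ^ m) ^ k)) :
    ∃ H : Finset (Fin N → ℤ), (∀ v, ∀ x ∈ U, x ∈ bwBox m i k v → v ∈ H) ∧
      (H.card : ℝ) ≤ 6 ^ N * (((1 / 2 : ℝ) ^ m) ^ k) ^ N * 2 ^ (∑ r, bwE m i k r) := by
  obtain ⟨y, hy⟩ := hU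
  set ρ : ℝ := ((1 / 2 : ℝ) ^ m) ^ k with hρ
  have hρ0 : 0 < ρ := by positivity
  refine ⟨Fintype.piFinset fun r => Finset.Icc
    ⌈y r * 2 ^ bwE m i k r - ρ * 2 ^ bwE m i k r - 1⌉
    ⌊y r * 2 ^ bwE m i k r + ρ * 2 ^ bwE m i k r⌋, ?_, ?_⟩
  · intro v x hx hxv
    rw [Fintype.mem_piFinset]
    intro r
    have h1 : dist x y ≤ ρ := by
      rw [← ENNReal.ofReal_le_ofReal_iff hρ0.le, ← edist_dist]
      exact (Metric.edist_le_ediam_of_mem hx hy).trans hd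
    have h2 := (dist_le_pi_dist x y r).trans h1
    rw [Real.dist_eq, abs_le] at h2
    obtain ⟨h3, h4⟩ := hxv r
    have hL : (0 : ℝ) < 2 ^ bwE m i k r := by positivity
    rw [Finset.mem_Icc, Int.ceil_le, Int.le_floor]
    constructor <;> nlinarith
  · rw [Fintype.card_piFinset]
    push_cast
    have : ∀ r, ((Finset.Icc ⌈y r * 2 ^ bwE m i k r - ρ * 2 ^ bwE m i k r - 1⌉
        ⌊y r * 2 ^ bwE m i k r + ρ * 2 ^ bwE m i k r⌋).card : ℝ) ≤
        6 * ρ * 2 ^ bwE m i k r := by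
      intro r
      have hge := bwE_ge m i k r
      have h0 := hi r
      have hbig : 1 ≤ 2 * (ρ * 2 ^ bwE m i k r) := by
        have e1 : (1 : ℝ) = ρ * 2 ^ ((k : ℝ) * m) := by
          rw [hρ, ← pow_mul, mul_comm (k : ℝ), ← Nat.cast_mul, Real.rpow_natCast, ← mul_pow]
          norm_num
        have e2 : (2 : ℝ) ^ ((k : ℝ) * m) ≤ (2 : ℝ) ^ ((k : ℝ) * m * (1 + i r)) := by
          apply Real.rpow_le_rpow_of_exponent_le (by norm_num)
          have : 0 ≤ (k : ℝ) * m * i r := by positivity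
          nlinarith
        nlinarith
      rw [Int.card_Icc]
      set A := y r * 2 ^ bwE m i k r
      set Bq := ρ * (2 : ℝ) ^ bwE m i k r with hBq
      have h1 := Int.floor_le (A + Bq)
      have h2 := Int.le_ceil (A - Bq - 1)
      rw [mul_assoc, ← hBq]
      have : (((⌊A + Bq⌋ + 1 - ⌈A - Bq - 1⌉).toNat : ℤ) : ℝ) ≤ 6 * Bq := by
        rw [Int.toNat_eq_max]
        push_cast
        apply max_le <;> linarith
      exact_mod_cast this
    refine (Finset.prod_le_prod (fun _ _ => by positivity) (fun r _ => this r)).trans ?_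
    rw [Finset.prod_mul_distrib, Finset.prod_pow_eq_pow_sum]
    simp [mul_pow]

lemma bw_cover {N : ℕ} (m : ℕ) (i : Fin N → ℝ) (hi : ∀ r, 0 ≤ i r) (s : ℝ) (hs : 0 < s)
    (hm : 1 ≤ m) (hms : 1 ≤ m * (N - s)) (U : Set (Fin N → ℝ)) (hU1 : Metric.ediam U ≤ 1)
    (η : ℝ≥0∞) (hη : 0 < η) :
    ∃ (k : ℕ) (H : Finset (Fin N → ℤ)), (∀ v, ∀ x ∈ U, x ∈ bwBox m i k v → v ∈ H) ∧
      (H.card : ℝ≥0∞) * ENNReal.ofReal (2 ^ k / 2 ^ (∑ r, bwE m i k r)) ≤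
        ENNReal.ofReal (6 ^ N * (((1 / 2 : ℝ) ^ m)⁻¹) ^ s) *
          (⨆ _ : U.Nonempty, Metric.ediam U ^ s) + η := by
  rcases U.eq_empty_or_nonempty with rfl | hne
  · exact ⟨0, ∅, by simp, by simp⟩
  set y : ℝ := (1 / 2 : ℝ) ^ m with hy
  have hy0 : 0 < y := by positivity
  have hy1 : y < 1 := pow_lt_one₀ (by norm_num) (by norm_num) (by omega)
  have hys : y ^ N * 2 ≤ y ^ s := by
    have e1 : y = (2 : ℝ) ^ (-(m : ℝ)) := by
      rw [hy, Real.rpow_neg (by norm_num), Real.rpow_natCast]; simp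
    rw [← Real.rpow_natCast y N, e1, ← Real.rpow_mul (by norm_num), ← Real.rpow_mul (by norm_num)]
    nth_rewrite 2 [← Real.rpow_one 2]
    rw [← Real.rpow_add (by norm_num)]
    apply Real.rpow_le_rpow_of_exponent_le (by norm_num)
    nlinarith
  have hcost : ∀ k, Metric.ediam U ≤ ENNReal.ofReal (y ^ k) →
      ∃ H : Finset (Fin N → ℤ), (∀ v, ∀ x ∈ U, x ∈ bwBox m i k v → v ∈ H) ∧
      (H.card : ℝ≥0∞) * ENNReal.ofReal (2 ^ k / 2 ^ (∑ r, bwE m i k r)) ≤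
        ENNReal.ofReal (6 ^ N * (y ^ s) ^ k) := by
    intro k hk
    obtain ⟨H, h1, h2⟩ := bw_cells m i hi k U hne hk
    refine ⟨H, h1, ?_⟩
    rw [← ENNReal.ofReal_natCast, ← ENNReal.ofReal_mul (by positivity)]
    apply ENNReal.ofReal_le_ofReal
    calc (H.card : ℝ) * (2 ^ k / 2 ^ (∑ r, bwE m i k r))
        ≤ (6 ^ N * (y ^ k) ^ N * 2 ^ (∑ r, bwE m i k r)) * (2 ^ k / 2 ^ (∑ r, bwE m i k r)) := by
          gcongr
      _ = 6 ^ N * (y ^ N * 2) ^ k := by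
          field_simp
          rw [mul_pow, ← pow_mul y N k, ← pow_mul y k N, mul_comm k N]
      _ ≤ 6 ^ N * (y ^ s) ^ k := by gcongr
  by_cases h0 : Metric.ediam U = 0
  · obtain ⟨η', hη'0, hη'⟩ : ∃ η' : ℝ, 0 < η' ∧ ENNReal.ofReal η' ≤ η := by
      obtain ⟨c, hc0, hc⟩ := ENNReal.lt_iff_exists_nnreal_btwn.mp hη
      exact ⟨c, by exact_mod_cast hc0, by simpa using hc.le⟩
    obtain ⟨k, hk⟩ := exists_pow_lt_of_lt_one (x := η' / 6 ^ N) (y := y ^ s) (by positivity)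
      (Real.rpow_lt_one hy0.le hy1 hs)
    obtain ⟨H, h1, h2⟩ := hcost k (by rw [h0]; exact zero_le)
    refine ⟨k, H, h1, h2.trans (le_trans ?_ le_add_self)⟩
    refine le_trans (ENNReal.ofReal_le_ofReal ?_) hη'
    rw [lt_div_iff₀ (by positivity)] at hk
    linarith
  · have hfin : Metric.ediam U ≠ ⊤ := ne_top_of_le_ne_top ENNReal.one_ne_top hU1
    set δ := (Metric.ediam U).toReal with hδ
    have hδe : Metric.ediam U = ENNReal.ofReal δ := (ENNReal.ofReal_toReal hfin).symm
    have hδ0 : 0 < δ := ENNReal.toReal_pos h0 hfin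
    have hδ1 : δ ≤ 1 := by
      have := ENNReal.toReal_mono ENNReal.one_ne_top hU1
      simpa using this
    obtain ⟨k, hk1, hk2⟩ := exists_nat_pow_near_of_lt_one hδ0 hδ1 hy0 hy1
    obtain ⟨H, h1, h2⟩ := hcost k (by rw [hδe]; exact ENNReal.ofReal_le_ofReal hk2)
    refine ⟨k, H, h1, h2.trans (le_trans ?_ le_self_add)⟩
    simp only [hne, iSup_pos]
    rw [hδe, ENNReal.ofReal_rpow_of_pos hδ0, ← ENNReal.ofReal_mul (by positivity)]
    apply ENNReal.ofReal_le_ofReal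
    rw [mul_assoc, ← Real.mul_rpow (by positivity) hδ0.le]
    gcongr
    rw [← Real.rpow_natCast, ← Real.rpow_mul hy0.le, mul_comm s, Real.rpow_mul hy0.le,
      Real.rpow_natCast]
    apply Real.rpow_le_rpow (by positivity) _ hs.le
    rw [le_inv_mul_iff₀ hy0, ← pow_succ']
    exact hk1.le

lemma bw_const {N : ℕ} (i : Fin N → ℝ) (T : ℝ) :
    ∃ c : ℝ, 0 < c ∧ ∀ r, 0 < i r → c ^ i r * T ≤ 1 := by
  have : ∀ᶠ c : ℝ in nhdsWithin 0 (Set.Ioi 0), ∀ r, 0 < i r → c ^ i r * T ≤ 1 := by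
    rw [Filter.eventually_all]
    intro r
    by_cases hr : 0 < i r
    · have h1 : Filter.Tendsto (fun c : ℝ => c ^ i r * T) (nhdsWithin 0 (Set.Ioi 0)) (nhds 0) := by
        have h2 : ContinuousAt (fun c : ℝ => c ^ i r * T) 0 :=
          (Real.continuousAt_rpow_const 0 (i r) (Or.inr hr.le)).mul continuousAt_const
        have h3 := h2.tendsto
        simp only [Real.zero_rpow hr.ne', zero_mul] at h3
        exact h3.mono_left nhdsWithin_le_nhds
      filter_upwards [h1.eventually (gt_mem_nhds one_pos)] with c hc _
      exact hc.le
    · exact Filter.Eventually.of_forall fun c h => absurd h hr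
  obtain ⟨c, hc1, hc2⟩ := (this.and self_mem_nhdsWithin).exists
  exact ⟨c, hc2, hc1⟩

/-- A cover of small cost misses a point of the set of badly approximable points. -/
lemma bw_main {N : ℕ} (i : Fin N → ℝ) (hi : ∀ r, 0 ≤ i r) (hsum : ∑ r, i r = 1)
    (s : ℝ) (hs : 0 < s) (hsN : s < N) :
    MeasureTheory.Measure.hausdorffMeasure s (badWeighted i) ≠ 0 := by
  intro hzero
  obtain ⟨m1, hm1⟩ := exists_nat_ge (1 / ((N : ℝ) - s))
  set m : ℕ := m1 + (2 * (4 * N + 1)) with hmdef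
  have hm : 2 * (4 * N + 1) ≤ 2 ^ m :=
    (Nat.le_add_left _ _).trans (Nat.lt_two_pow_self (n := m)).le
  have hmone : 1 ≤ m := by omega
  have hms : 1 ≤ m * ((N : ℝ) - s) := by
    have h0 : 0 < (N : ℝ) - s := by linarith
    rw [div_le_iff₀ h0] at hm1
    refine hm1.trans ?_
    gcongr
    omega
  set K : ℝ := 4 ^ (N + 1) * (N + 1).factorial with hK
  have hfac : (1 : ℝ) ≤ (N + 1).factorial := by exact_mod_cast Nat.succ_le_of_lt (Nat.factorial_pos _)
  have h4 : (1 : ℝ) ≤ 4 ^ (N + 1) := one_le_pow₀ (by norm_num)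
  have hK1 : 1 ≤ K := by rw [hK]; nlinarith
  obtain ⟨c, hc, hci⟩ := bw_const i ((K * 2 ^ m) ^ 2 * 2 ^ (2 * m))
  choose G hG1 hG2 hG3 using bw_key m hm i hi hsum K c hK hc hci
  -- the cover
  set A : ℝ≥0∞ := ENNReal.ofReal (6 ^ N * (((1 / 2 : ℝ) ^ m)⁻¹) ^ s) with hA
  have hA0 : A ≠ 0 := by
    rw [hA]
    simp only [ne_eq, ENNReal.ofReal_eq_zero, not_le]
    positivity
  have hAt : A ≠ ⊤ := ENNReal.ofReal_ne_top
  rw [MeasureTheory.Measure.hausdorffMeasure_apply] at hzero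
  simp only [ENNReal.iSup_eq_zero] at hzero
  have hz := hzero 1 one_pos
  have hlt : (0 : ℝ≥0∞) < 2⁻¹ / A := ENNReal.div_pos (by simp) hAt
  rw [← hz] at hlt
  simp only [iInf_lt_iff] at hlt
  obtain ⟨t, ht1, ht2, ht3⟩ := hlt
  obtain ⟨η, hη0, hη⟩ := ENNReal.exists_pos_sum_of_countable' (ε := 2⁻¹) (by simp) ℕ
  choose κ H hH1 hH2 using fun j => bw_cover m i hi s hs hmone hms (t j) (ht2 j) (η j) (hη0 j)
  let g : ℕ → ℝ≥0∞ := fun k => ENNReal.ofReal (2 ^ k / 2 ^ (∑ r, bwE m i k r))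
  have hcost : ∑' p : (Σ j, H j), g (κ p.1) < g 0 := by
    have h1 : ∑' p : (Σ j, H j), g (κ p.1) = ∑' j, ((H j).card : ℝ≥0∞) * g (κ j) := by
      rw [ENNReal.tsum_sigma (fun j (_ : H j) => g (κ j))]
      congr 1
      funext j
      rw [tsum_fintype]
      simp
    have hg0 : g 0 = 1 := by simp [g, bwE_zero]
    rw [h1, hg0]
    calc ∑' j, ((H j).card : ℝ≥0∞) * g (κ j)
        ≤ ∑' j, (A * (⨆ _ : (t j).Nonempty, Metric.ediam (t j) ^ s) + η j) :=
          ENNReal.tsum_le_tsum fun j => hH2 j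
      _ = A * (∑' j, ⨆ _ : (t j).Nonempty, Metric.ediam (t j) ^ s) + ∑' j, η j := by
          rw [ENNReal.tsum_add, ENNReal.tsum_mul_left]
      _ < 2⁻¹ + 2⁻¹ := by
          apply ENNReal.add_lt_add _ hη
          rw [mul_comm]
          exact ENNReal.mul_lt_of_lt_div ht3
      _ = 1 := ENNReal.inv_two_add_inv_two
  obtain ⟨u, hu1, hu2⟩ := bw_tree g
    (fun n v r => v r / 2 ^ (bwE m i (n + 1) r - bwE m i n r)) G
    (fun n u v hv => funext fun r => hG1 n u v hv r)
    (by
      intro n u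
      simp only [g]
      rw [← ENNReal.ofReal_natCast (G n u).card, ← ENNReal.ofReal_mul (by positivity)]
      apply ENNReal.ofReal_le_ofReal
      rw [div_mul_eq_mul_div, div_le_div_iff₀ (by positivity) (by positivity)]
      have := hG2 n u
      have h' : (2 : ℝ) ^ (∑ r, bwE m i (n + 1) r) ≤
        2 * (G n u).card * 2 ^ (∑ r, bwE m i n r) := by exact_mod_cast this
      rw [pow_succ]
      have hp : (0 : ℝ) < 2 ^ n := by positivity
      nlinarith)
    (fun p : (Σ j, H j) => κ p.1)
    (fun n p r => (p.2 : Fin N → ℤ) r / 2 ^ (bwE m i (κ p.1) r - bwE m i n r))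
    (by
      intro n p hn
      funext r
      simp only
      have h1 : bwE m i n r ≤ bwE m i (n + 1) r := bwE_mono m i hi r (Nat.le_succ n)
      have h2 : bwE m i (n + 1) r ≤ bwE m i (κ p.1) r := bwE_mono m i hi r hn
      rw [Int.ediv_ediv_of_nonneg (by positivity), ← pow_add]
      congr 2
      omega)
    hcost 0
  have hne : (⋂ n, bwBox m i n (u n)).Nonempty := by
    apply IsCompact.nonempty_iInter_of_sequence_nonempty_isCompact_isClosed
    · intro n
      exact bwBox_subset m i hi n _ _ (hG1 n _ _ (hu1 n))
    · intro n; exact bwBox_nonempty m i n _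
    · rw [bwBox_eq]; exact isCompact_Icc
    · intro n; rw [bwBox_eq]; exact isClosed_Icc
  obtain ⟨x, hx⟩ := hne
  rw [Set.mem_iInter] at hx
  have hxbad : x ∈ badWeighted i := by
    refine ⟨c, hc, ?_⟩
    intro q hq
    have hq1 : (1 : ℝ) ≤ q := by exact_mod_cast hq
    obtain ⟨n, hn1, hn2⟩ := exists_nat_pow_near (x := K * q) (y := (2 : ℝ) ^ m) (by nlinarith)
      (one_lt_pow₀ (by norm_num) (by omega))
    apply hG3 (n + 1) (u (n + 1)) (u (n + 1 + 1)) (hu1 (n + 1)) x (hx (n + 1 + 1)) q hq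
    · rw [pow_mul, pow_succ]
      gcongr
    · rw [pow_mul]; exact hn2
  obtain ⟨j, hj⟩ := Set.mem_iUnion.mp (ht1 hxbad)
  have hmem := hH1 j (u (κ j)) x hj (hx (κ j))
  apply hu2 ⟨j, ⟨u (κ j), hmem⟩⟩
  funext r
  simp

/-- For any `N`-tuple of real numbers `i₁, …, i_N ≥ 0` with `i₁ + ⋯ + i_N = 1`, the set
`Bad(i₁, …, i_N) ⊆ ℝ^N` has Hausdorff dimension `N`. -/
theorem dimH_badWeighted_eq (N : ℕ) (i : Fin N → ℝ) (hi : ∀ r, 0 ≤ i r)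
    (hsum : ∑ r, i r = 1) :
    dimH (badWeighted i) = (N : ℝ≥0∞) := by
  apply le_antisymm
  · rw [← Real.dimH_univ_pi_fin N]
    exact dimH_mono (Set.subset_univ _)
  · apply le_of_forall_lt_imp_le_of_dense
    intro d hd
    lift d to NNReal using (hd.trans_le le_top).ne
    rcases eq_or_ne d 0 with rfl | hd0
    · simp
    · apply le_dimH_of_hausdorffMeasure_ne_zero
      apply bw_main i hi hsum
      · exact_mod_cast pos_iff_ne_zero.mpr hd0
      · exact_mod_cast hd
end

section
/- For any i, j ≥ 0 with i + j = 1, the set Bad(i,j) ∩ Bad(1,0) ∩ Bad(0,1) — equivalently, the set of pairs (x₁,x₂) ∈ ℝ² which are (i,j)-badly approximable and with both x₁ and x₂ badly approximable real numbers — has Hausdorff dimension 2. -/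
open scoped ENNReal

/-- The set of badly approximable real numbers: `y ∈ Bad` iff there is `c > 0` with
`‖q y‖ > c / q` for all integers `q ≥ 1`. -/
def badOneDim : Set ℝ :=
  {y | ∃ c : ℝ, 0 < c ∧ ∀ q : ℕ, 0 < q → c / (q : ℝ) < distToNearestInt ((q : ℝ) * y)}


lemma card_near (p : ℕ) (g : ℝ) :
    ((Finset.range p).filter (fun t : ℕ => |(t : ℝ) - g| ≤ 4)).card ≤ 9 := by
  have h1 : ((Finset.range p).filter (fun t : ℕ => |(t : ℝ) - g| ≤ 4)).card
      ≤ (Finset.Icc ⌈g - 4⌉ ⌊g + 4⌋).card := by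
    apply Finset.card_le_card_of_injOn (fun t : ℕ => (t : ℤ))
    · intro t ht
      simp only [Finset.coe_filter, Set.mem_ofPred_eq, abs_le] at ht
      simp only [Finset.coe_Icc, Set.mem_Icc, Int.ceil_le, Int.le_floor]
      push_cast
      constructor <;> linarith [ht.2.1, ht.2.2]
    · intro a _ b _ h
      have h' : (a : ℤ) = b := h
      exact_mod_cast h'
  refine h1.trans ?_
  rw [Int.card_Icc]
  have h2 : ((⌊g + 4⌋ - ⌈g - 4⌉ : ℤ) : ℝ) ≤ 8 := by
    push_cast
    linarith [Int.floor_le (g + 4), Int.le_ceil (g - 4)]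
  have h3 : ⌊g + 4⌋ - ⌈g - 4⌉ ≤ 8 := by exact_mod_cast h2
  omega

lemma near_aux {u v w x y a b s t X Y : ℝ} (hv : v ≠ 0) (hb : 0 < b)
    (h : |u| * a ≤ |v| * b) (hL : u * X + v * Y = w)
    (hX : |x + s * a - X| ≤ 2 * a) (hY : |y + t * b - Y| ≤ 2 * b) :
    |t - (w - u * (x + s * a) - v * y) / (v * b)| ≤ 4 := by
  have e : t - (w - u * (x + s * a) - v * y) / (v * b)
      = (v * (y + t * b - Y) + u * (x + s * a - X)) / (v * b) := by
    rw [← hL]; field_simp; ring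
  rw [e, abs_div, abs_mul v b, abs_of_pos hb, div_le_iff₀ (mul_pos (abs_pos.2 hv) hb)]
  calc |v * (y + t * b - Y) + u * (x + s * a - X)|
      ≤ |v| * |y + t * b - Y| + |u| * |x + s * a - X| := by
        rw [← abs_mul, ← abs_mul]; exact abs_add_le _ _
    _ ≤ |v| * (2 * b) + |u| * (2 * a) := by gcongr
    _ ≤ 4 * (|v| * b) := by linarith

/-- Closeness of the grid point `(s,t)` to the line `uX+vY=w`. -/
def NearLine (u v w x y a b : ℝ) (s t : ℕ) : Prop :=
  ∃ X Y : ℝ, u * X + v * Y = w ∧ |x + s * a - X| ≤ 2 * a ∧ |y + t * b - Y| ≤ 2 * b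

open Classical in
lemma card_nearLine (u v w x y a b : ℝ) (ha : 0 < a) (hb : 0 < b) (huv : u ≠ 0 ∨ v ≠ 0)
    (p q : ℕ) :
    (((Finset.range p) ×ˢ (Finset.range q)).filter
      (fun st => NearLine u v w x y a b st.1 st.2)).card ≤ 9 * (p + q) := by
  by_cases h : |u| * a ≤ |v| * b
  · have hv : v ≠ 0 := by
      rintro rfl
      rcases huv with hu | hu
      · have := mul_pos (abs_pos.2 hu) ha
        simp at h; linarith
      · exact hu rfl
    have := Finset.card_le_mul_card_image_of_maps_to (s := (((Finset.range p) ×ˢ (Finset.range q)).filter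
      (fun st => NearLine u v w x y a b st.1 st.2))) (t := Finset.range p) (f := Prod.fst)
      (by intro st hst; simp only [Finset.mem_filter, Finset.mem_product] at hst; exact hst.1.1) 9
      (by
        intro s hs
        refine le_trans ?_ (card_near q ((w - u * (x + s * a) - v * y) / (v * b)))
        apply Finset.card_le_card_of_injOn Prod.snd
        · rintro ⟨s', t⟩ hst
          simp only [Finset.coe_filter, Finset.mem_filter, Finset.mem_product, Set.mem_ofPred_eq] at hst ⊢
          obtain ⟨⟨⟨_, h2⟩, X, Y, h3, h4, h5⟩, rfl⟩ := hst
          exact ⟨h2, near_aux hv hb h h3 h4 h5⟩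
        · rintro ⟨s1, t1⟩ h1 ⟨s2, t2⟩ h2 h3
          simp only [Finset.coe_filter, Set.mem_ofPred_eq] at h1 h2 h3
          simp [h1.2, h2.2, h3])
    simp only [Finset.card_range] at this
    omega
  · push Not at h
    have hu : u ≠ 0 := by
      rintro rfl
      have := mul_nonneg (abs_nonneg v) hb.le
      simp at h; linarith
    have := Finset.card_le_mul_card_image_of_maps_to (s := (((Finset.range p) ×ˢ (Finset.range q)).filter
      (fun st => NearLine u v w x y a b st.1 st.2))) (t := Finset.range q) (f := Prod.snd)
      (by intro st hst; simp only [Finset.mem_filter, Finset.mem_product] at hst; exact hst.1.2) 9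
      (by
        intro t ht
        refine le_trans ?_ (card_near p ((w - v * (y + t * b) - u * x) / (u * a)))
        apply Finset.card_le_card_of_injOn Prod.fst
        · rintro ⟨s, t'⟩ hst
          simp only [Finset.coe_filter, Finset.mem_filter, Finset.mem_product, Set.mem_ofPred_eq] at hst ⊢
          obtain ⟨⟨⟨h2, _⟩, X, Y, h3, h4, h5⟩, rfl⟩ := hst
          exact ⟨h2, near_aux hu ha h.le (by linarith) h5 h4⟩
        · rintro ⟨s1, t1⟩ h1 ⟨s2, t2⟩ h2 h3
          simp only [Finset.coe_filter, Set.mem_ofPred_eq] at h1 h2 h3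
          simp [h1.2, h2.2, h3])
    simp only [Finset.card_range] at this
    omega

/-- A planar set all of whose triples are degenerate lies on a line. -/
lemma exists_line (Z : Set (ℝ × ℝ))
    (h : ∀ P ∈ Z, ∀ Q ∈ Z, ∀ S ∈ Z,
      (Q.1 - P.1) * (S.2 - P.2) - (S.1 - P.1) * (Q.2 - P.2) = 0) :
    ∃ u v w : ℝ, (u ≠ 0 ∨ v ≠ 0) ∧ ∀ P ∈ Z, u * P.1 + v * P.2 = w := by
  by_cases hZ : Z.Subsingleton
  · rcases Z.eq_empty_or_nonempty with rfl | ⟨P, hP⟩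
    · exact ⟨1, 0, 0, by simp, by simp⟩
    · exact ⟨1, 0, P.1, by simp, fun Q hQ => by rw [hZ hQ hP]; ring⟩
  · rw [Set.not_subsingleton_iff] at hZ
    obtain ⟨P, hP, Q, hQ, hne⟩ := hZ
    refine ⟨-(Q.2 - P.2), Q.1 - P.1, -(Q.2 - P.2) * P.1 + (Q.1 - P.1) * P.2, ?_, ?_⟩
    · by_contra hc
      push Not at hc
      apply hne
      ext <;> linarith [hc.1, hc.2]
    · intro S hS
      have := h P hP Q hQ S hS
      linarith

lemma det_rat (p₁ r₁ p₂ r₂ p₃ r₃ : ℤ) (q₁ q₂ q₃ : ℕ) (h₁ : 0 < q₁) (h₂ : 0 < q₂) (h₃ : 0 < q₃)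
    {M : ℝ} (hM₁ : (q₁ : ℝ) < M) (hM₂ : (q₂ : ℝ) < M) (hM₃ : (q₃ : ℝ) < M)
    (h : |((p₂ : ℝ) / q₂ - p₁ / q₁) * ((r₃ : ℝ) / q₃ - r₁ / q₁)
      - ((p₃ : ℝ) / q₃ - p₁ / q₁) * ((r₂ : ℝ) / q₂ - r₁ / q₁)| * M ^ 3 ≤ 1) :
    ((p₂ : ℝ) / q₂ - p₁ / q₁) * ((r₃ : ℝ) / q₃ - r₁ / q₁)
      - ((p₃ : ℝ) / q₃ - p₁ / q₁) * ((r₂ : ℝ) / q₂ - r₁ / q₁) = 0 := by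
  have g₁ : (0 : ℝ) < q₁ := by exact_mod_cast h₁
  have g₂ : (0 : ℝ) < q₂ := by exact_mod_cast h₂
  have g₃ : (0 : ℝ) < q₃ := by exact_mod_cast h₃
  set D := ((p₂ : ℝ) / q₂ - p₁ / q₁) * ((r₃ : ℝ) / q₃ - r₁ / q₁)
      - ((p₃ : ℝ) / q₃ - p₁ / q₁) * ((r₂ : ℝ) / q₂ - r₁ / q₁) with hD
  let N : ℤ := q₁ * (p₂ * r₃ - p₃ * r₂) - q₂ * (p₁ * r₃ - p₃ * r₁) + q₃ * (p₁ * r₂ - p₂ * r₁)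
  have hN : (N : ℝ) = D * (q₁ * q₂ * q₃) := by
    simp only [N, hD]; push_cast; field_simp; ring
  by_contra hne
  have hpos : 0 < |D| := abs_pos.2 hne
  have hlt : |(N : ℝ)| < 1 := by
    rw [hN, abs_mul, abs_of_pos (by positivity : (0 : ℝ) < q₁ * q₂ * q₃)]
    refine lt_of_lt_of_le ?_ h
    have : (q₁ * q₂ * q₃ : ℝ) < M ^ 3 := by
      calc (q₁ * q₂ * q₃ : ℝ) < M * M * M := by gcongr
        _ = M ^ 3 := by ring
    gcongr
  have hN0 : N = 0 := by
    have : |N| < 1 := by exact_mod_cast hlt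
    exact Int.abs_lt_one_iff.1 this
  rw [hN0] at hN
  have : D * (q₁ * q₂ * q₃) ≠ 0 := by positivity
  exact this (by rw [← hN]; simp)

lemma rat_eq_s12 (p₁ p₂ : ℤ) (q₁ q₂ : ℕ) (h₁ : 0 < q₁) (h₂ : 0 < q₂) {M : ℝ}
    (hM₁ : (q₁ : ℝ) ^ 2 < M) (hM₂ : (q₂ : ℝ) ^ 2 < M)
    (h : |(p₁ : ℝ) / q₁ - p₂ / q₂| * M ≤ 1) : (p₁ : ℝ) / q₁ = p₂ / q₂ := by
  have g₁ : (0 : ℝ) < q₁ := by exact_mod_cast h₁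
  have g₂ : (0 : ℝ) < q₂ := by exact_mod_cast h₂
  by_contra hne
  have hpos : 0 < |(p₁ : ℝ) / q₁ - p₂ / q₂| := abs_pos.2 (sub_ne_zero.2 hne)
  let N : ℤ := p₁ * q₂ - p₂ * q₁
  have hN : (N : ℝ) = ((p₁ : ℝ) / q₁ - p₂ / q₂) * (q₁ * q₂) := by
    simp only [N]; push_cast; field_simp
  have hlt : |(N : ℝ)| < 1 := by
    rw [hN, abs_mul, abs_of_pos (by positivity : (0 : ℝ) < q₁ * q₂)]
    refine lt_of_lt_of_le ?_ h
    have : (q₁ * q₂ : ℝ) < M := by nlinarith [sq_nonneg ((q₁ : ℝ) - q₂)]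
    gcongr
  have hN0 : N = 0 := by
    have : |N| < 1 := by exact_mod_cast hlt
    exact Int.abs_lt_one_iff.1 this
  rw [hN0] at hN
  have h0 : (p₁ : ℝ) / q₁ - p₂ / q₂ ≠ 0 := sub_ne_zero.2 hne
  have : ((p₁ : ℝ) / q₁ - p₂ / q₂) * (q₁ * q₂) ≠ 0 := by positivity
  exact this (by rw [← hN]; simp)

/-- Side length of a level `n` box. -/
noncomputable def sideLen (R α : ℝ) (n : ℕ) : ℝ := α ^ n / R ^ 3

/-- Half-open level `n` box with lower left corner `(x,y)`. -/
def hbox (R α β : ℝ) (n : ℕ) (x y : ℝ) : Set (ℝ × ℝ) :=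
  Set.Ico x (x + sideLen R α n) ×ˢ Set.Ico y (y + sideLen R β n)

/-- Standing assumptions on the parameters. -/
structure Params (R α β : ℝ) : Prop where
  hR : 1000 ≤ R
  hα : 0 < α
  hβ : 0 < β
  hαR : α * R ≤ 1
  hβR : β * R ≤ 1
  hαβ : α * β * R ^ 3 = 1

namespace Params
variable {R α β : ℝ}

lemma symm (h : Params R α β) : Params R β α :=
  ⟨h.hR, h.hβ, h.hα, h.hβR, h.hαR, by rw [mul_comm β α]; exact h.hαβ⟩

lemma Rpos (h : Params R α β) : 0 < R := by linarith [h.hR]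

lemma side_pos (h : Params R α β) (n : ℕ) : 0 < sideLen R α n := by
  have := h.Rpos; have := h.hα
  unfold sideLen; positivity

lemma side_succ (n : ℕ) : sideLen R α (n + 1) = α * sideLen R α n := by
  unfold sideLen; ring

lemma α_lt (h : Params R α β) : α ≤ 1 / 1000 := by
  have := h.hαR; have := h.hα; have := h.hR
  nlinarith

lemma one_le (h : Params R α β) : 1 ≤ α * R ^ 2 := by
  have h1 := h.hαβ; have h2 := h.hβR; have := h.hα; have := h.Rpos
  have : α * β * R ^ 3 = (α * R ^ 2) * (β * R) := by ring
  have h3 : 0 < α * R ^ 2 := by positivity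
  nlinarith

lemma lines_pt (h : Params R α β) (n : ℕ) (x y : ℝ) :
    ∃ u v w : ℝ, (u ≠ 0 ∨ v ≠ 0) ∧ ∀ (q : ℕ) (p r : ℤ), 0 < q → (q : ℝ) < R ^ (n + 1) →
      (p : ℝ) / q ∈ Set.Icc (x - sideLen R α n) (x + 2 * sideLen R α n) →
      (r : ℝ) / q ∈ Set.Icc (y - sideLen R β n) (y + 2 * sideLen R β n) →
      u * ((p : ℝ) / q) + v * ((r : ℝ) / q) = w := by
  have hR := h.Rpos
  have ha := h.side_pos n
  have hb := h.symm.side_pos n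
  have key : 18 * (sideLen R α n * sideLen R β n) * (R ^ (n + 1)) ^ 3 ≤ 1 := by
    have e : 18 * (sideLen R α n * sideLen R β n) * (R ^ (n + 1)) ^ 3
        = 18 * (α * β * R ^ 3) ^ n / R ^ 3 := by
      unfold sideLen
      field_simp
      ring
    rw [e, h.hαβ, one_pow, div_le_one (by positivity)]
    have := h.hR
    nlinarith [pow_le_pow_left₀ (by norm_num) this 3]
  obtain ⟨u, v, w, huv, hl⟩ := exists_line
    {P | ∃ (q : ℕ) (p r : ℤ), 0 < q ∧ (q : ℝ) < R ^ (n + 1) ∧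
      (p : ℝ) / q ∈ Set.Icc (x - sideLen R α n) (x + 2 * sideLen R α n) ∧
      (r : ℝ) / q ∈ Set.Icc (y - sideLen R β n) (y + 2 * sideLen R β n) ∧
      P = ((p : ℝ) / q, (r : ℝ) / q)} (by
    rintro _ ⟨q₁, p₁, r₁, h₁, g₁, i₁, j₁, rfl⟩ _ ⟨q₂, p₂, r₂, h₂, g₂, i₂, j₂, rfl⟩ _
      ⟨q₃, p₃, r₃, h₃, g₃, i₃, j₃, rfl⟩
    apply det_rat p₁ r₁ p₂ r₂ p₃ r₃ q₁ q₂ q₃ h₁ h₂ h₃ g₁ g₂ g₃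
    refine le_trans ?_ key
    gcongr
    simp only [Set.mem_Icc] at i₁ i₂ i₃ j₁ j₂ j₃
    have e1 : |(p₂ : ℝ) / q₂ - p₁ / q₁| ≤ 3 * sideLen R α n := by
      rw [abs_le]; constructor <;> linarith
    have e2 : |(p₃ : ℝ) / q₃ - p₁ / q₁| ≤ 3 * sideLen R α n := by
      rw [abs_le]; constructor <;> linarith
    have e3 : |(r₂ : ℝ) / q₂ - r₁ / q₁| ≤ 3 * sideLen R β n := by
      rw [abs_le]; constructor <;> linarith
    have e4 : |(r₃ : ℝ) / q₃ - r₁ / q₁| ≤ 3 * sideLen R β n := by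
      rw [abs_le]; constructor <;> linarith
    refine (abs_sub _ _).trans ?_
    rw [abs_mul, abs_mul]
    calc _ ≤ 3 * sideLen R α n * (3 * sideLen R β n) + 3 * sideLen R α n * (3 * sideLen R β n) := by
          gcongr
      _ = _ := by ring)
  exact ⟨u, v, w, huv, fun q p r h1 h2 h3 h4 => hl _ ⟨q, p, r, h1, h2, h3, h4, rfl⟩⟩

lemma line_one (h : Params R α β) (n : ℕ) (x : ℝ) :
    ∃ w : ℝ, ∀ (q : ℕ) (p : ℤ), 0 < q → (q : ℝ) ^ 2 < (1 / α) ^ (n + 1) →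
      (p : ℝ) / q ∈ Set.Icc (x - sideLen R α n) (x + 2 * sideLen R α n) →
      (p : ℝ) / q = w := by
  have hR := h.Rpos
  have hα := h.hα
  have key : 3 * sideLen R α n * (1 / α) ^ (n + 1) ≤ 1 := by
    have e : 3 * sideLen R α n * (1 / α) ^ (n + 1) = 3 / (α * R ^ 3) := by
      unfold sideLen
      rw [div_pow, one_pow]
      field_simp
      ring
    rw [e, div_le_one (by positivity)]
    have := h.one_le
    have := h.hR
    nlinarith
  by_cases hex : ∃ (q : ℕ) (p : ℤ), 0 < q ∧ (q : ℝ) ^ 2 < (1 / α) ^ (n + 1) ∧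
      (p : ℝ) / q ∈ Set.Icc (x - sideLen R α n) (x + 2 * sideLen R α n)
  · obtain ⟨q₀, p₀, h₀, g₀, i₀⟩ := hex
    refine ⟨p₀ / q₀, fun q p h1 g1 i1 => ?_⟩
    apply rat_eq_s12 p p₀ q q₀ h1 h₀ g1 g₀
    refine le_trans ?_ key
    gcongr
    simp only [Set.mem_Icc] at i₀ i1
    rw [abs_le]; constructor <;> linarith
  · push Not at hex
    exact ⟨0, fun q p h1 g1 i1 => absurd i1 (hex q p h1 g1)⟩

end Params

/-- The closed level `n+1` box at `(x,y)` avoids all dangerous regions of level `n`. -/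
def Avoid (R α β : ℝ) (n : ℕ) (x y : ℝ) : Prop :=
  ∀ X ∈ Set.Icc x (x + sideLen R α (n + 1)), ∀ Y ∈ Set.Icc y (y + sideLen R β (n + 1)),
    (∀ (q : ℕ) (p r : ℤ), 0 < q → (q : ℝ) < R ^ (n + 1) →
      ¬ (|X - p / q| ≤ sideLen R α (n + 1) ∧ |Y - r / q| ≤ sideLen R β (n + 1))) ∧
    (∀ (q : ℕ) (p : ℤ), 0 < q → (q : ℝ) ^ 2 < (1 / α) ^ (n + 1) →
      ¬ |X - p / q| ≤ sideLen R α (n + 1)) ∧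
    (∀ (q : ℕ) (p : ℤ), 0 < q → (q : ℝ) ^ 2 < (1 / β) ^ (n + 1) →
      ¬ |Y - p / q| ≤ sideLen R β (n + 1))

lemma Params.floor_bounds {R α β : ℝ} (h : Params R α β) :
    1 - α < ⌊1 / α⌋₊ * α ∧ ⌊1 / α⌋₊ * α ≤ 1 := by
  have hα := h.hα
  constructor
  · have := Nat.lt_floor_add_one (1 / α)
    rw [div_lt_iff₀ hα] at this
    linarith
  · have := Nat.floor_le (show 0 ≤ 1 / α by positivity)
    rwa [le_div_iff₀ hα] at this

lemma Params.sub_Icc {R α β : ℝ} (h : Params R α β) (n : ℕ) (x : ℝ) (s : ℕ)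
    (hs : s < ⌊1 / α⌋₊) :
    x ≤ x + s * sideLen R α (n + 1) ∧
    x + s * sideLen R α (n + 1) + sideLen R α (n + 1) ≤ x + sideLen R α n := by
  have ha := h.side_pos n
  have hα := h.hα
  have e := Params.side_succ (R := R) (α := α) n
  have hb := h.floor_bounds.2
  have ha' := h.side_pos (n + 1)
  constructor
  · have : (0 : ℝ) ≤ s * sideLen R α (n + 1) := by positivity
    linarith
  · have h1 : ((s : ℝ) + 1) ≤ ⌊1 / α⌋₊ := by exact_mod_cast hs
    have h2 : ((s : ℝ) + 1) * α ≤ 1 := le_trans (by gcongr) hb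
    rw [e]
    nlinarith

/-- Closed boxes not near the lines avoid the dangerous regions. -/
lemma Params.avoid {R α β : ℝ} (h : Params R α β) (n : ℕ) (x y : ℝ) :
    ∃ u v w w₁ w₂ : ℝ, (u ≠ 0 ∨ v ≠ 0) ∧ ∀ s t : ℕ, s < ⌊1 / α⌋₊ → t < ⌊1 / β⌋₊ →
      ¬ NearLine u v w x y (sideLen R α (n + 1)) (sideLen R β (n + 1)) s t →
      ¬ NearLine 1 0 w₁ x y (sideLen R α (n + 1)) (sideLen R β (n + 1)) s t →
      ¬ NearLine 0 1 w₂ x y (sideLen R α (n + 1)) (sideLen R β (n + 1)) s t →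
      Avoid R α β n (x + s * sideLen R α (n + 1)) (y + t * sideLen R β (n + 1)) := by
  obtain ⟨u, v, w, huv, hl⟩ := h.lines_pt n x y
  obtain ⟨w₁, hw₁⟩ := h.line_one n x
  obtain ⟨w₂, hw₂⟩ := h.symm.line_one n y
  refine ⟨u, v, w, w₁, w₂, huv, fun s t hs ht n0 n1 n2 X hX Y hY => ?_⟩
  obtain ⟨s1, s2⟩ := h.sub_Icc n x s hs
  obtain ⟨t1, t2⟩ := h.symm.sub_Icc n y t ht
  have a1 := h.side_pos (n + 1)
  have b1 := h.symm.side_pos (n + 1)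
  have a0 := h.side_pos n
  have b0 := h.symm.side_pos n
  have aa : sideLen R α (n + 1) ≤ sideLen R α n := by linarith
  have bb : sideLen R β (n + 1) ≤ sideLen R β n := by linarith
  simp only [Set.mem_Icc] at hX hY
  have nx : ∀ z : ℝ, |X - z| ≤ sideLen R α (n + 1) →
      |x + s * sideLen R α (n + 1) - z| ≤ 2 * sideLen R α (n + 1) ∧
      z ∈ Set.Icc (x - sideLen R α n) (x + 2 * sideLen R α n) := by
    intro z hz
    rw [abs_le] at hz
    refine ⟨by rw [abs_le]; constructor <;> linarith, by constructor <;> linarith⟩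
  have ny : ∀ z : ℝ, |Y - z| ≤ sideLen R β (n + 1) →
      |y + t * sideLen R β (n + 1) - z| ≤ 2 * sideLen R β (n + 1) ∧
      z ∈ Set.Icc (y - sideLen R β n) (y + 2 * sideLen R β n) := by
    intro z hz
    rw [abs_le] at hz
    refine ⟨by rw [abs_le]; constructor <;> linarith, by constructor <;> linarith⟩
  refine ⟨?_, ?_, ?_⟩
  · rintro q p r hq hqR ⟨c1, c2⟩
    exact n0 ⟨p / q, r / q, hl q p r hq hqR (nx _ c1).2 (ny _ c2).2, (nx _ c1).1, (ny _ c2).1⟩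
  · rintro q p hq hqR c1
    refine n1 ⟨p / q, y + t * sideLen R β (n + 1), ?_, (nx _ c1).1, by simp [b1.le]⟩
    rw [hw₁ q p hq hqR (nx _ c1).2]; ring
  · rintro q p hq hqR c1
    refine n2 ⟨x + s * sideLen R α (n + 1), p / q, ?_, by simp [a1.le], (ny _ c1).1⟩
    rw [hw₂ q p hq hqR (ny _ c1).2]; ring

open MeasureTheory

lemma volume_hbox {R α β : ℝ} (h : Params R α β) (n : ℕ) (x y : ℝ) :
    volume (hbox R α β n x y) = ENNReal.ofReal (sideLen R α n * sideLen R β n) := by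
  unfold hbox
  rw [Measure.volume_eq_prod, Measure.prod_prod, Real.volume_Ico, Real.volume_Ico,
    ENNReal.ofReal_mul (h.side_pos n).le]
  simp

lemma measurableSet_hbox (R α β : ℝ) (n : ℕ) (x y : ℝ) : MeasurableSet (hbox R α β n x y) :=
  measurableSet_Ico.prod measurableSet_Ico

lemma Ico_grid_inj {x a z : ℝ} {s s' : ℕ} (ha : 0 < a)
    (h1 : z ∈ Set.Ico (x + s * a) (x + s * a + a)) (h2 : z ∈ Set.Ico (x + s' * a) (x + s' * a + a)) :
    s = s' := by
  simp only [Set.mem_Ico] at h1 h2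
  have e1 : ((s : ℝ)) < s' + 1 := by
    by_contra hc; push Not at hc
    nlinarith [mul_le_mul_of_nonneg_right hc ha.le]
  have e2 : ((s' : ℝ)) < s + 1 := by
    by_contra hc; push Not at hc
    nlinarith [mul_le_mul_of_nonneg_right hc ha.le]
  have e1' : s < s' + 1 := by exact_mod_cast e1
  have e2' : s' < s + 1 := by exact_mod_cast e2
  omega

open Classical in
lemma Params.step {R α β : ℝ} (h : Params R α β) (n : ℕ) (x y : ℝ) (μ : Measure (ℝ × ℝ))
    (hμ : 2 * μ (hbox R α β n x y) < volume (hbox R α β n x y)) :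
    ∃ x' y' : ℝ, x ≤ x' ∧ x' + sideLen R α (n + 1) ≤ x + sideLen R α n ∧
      y ≤ y' ∧ y' + sideLen R β (n + 1) ≤ y + sideLen R β n ∧
      Avoid R α β n x' y' ∧
      μ (hbox R α β (n + 1) x' y') < volume (hbox R α β (n + 1) x' y') := by
  obtain ⟨u, v, w, w₁, w₂, huv, hav⟩ := h.avoid n x y
  have a1 := h.side_pos (n + 1)
  have b1 := h.symm.side_pos (n + 1)
  set a := sideLen R α (n + 1) with ha
  set b := sideLen R β (n + 1) with hb
  set p := ⌊1 / α⌋₊ with hp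
  set p' := ⌊1 / β⌋₊ with hp'
  set G := (Finset.range p) ×ˢ (Finset.range p') with hG
  set F0 := G.filter (fun st => NearLine u v w x y a b st.1 st.2)
  set F1 := G.filter (fun st => NearLine 1 0 w₁ x y a b st.1 st.2)
  set F2 := G.filter (fun st => NearLine 0 1 w₂ x y a b st.1 st.2)
  set S := G.filter (fun st => ¬ NearLine u v w x y a b st.1 st.2 ∧
    ¬ NearLine 1 0 w₁ x y a b st.1 st.2 ∧ ¬ NearLine 0 1 w₂ x y a b st.1 st.2) with hS
  have c0 : F0.card ≤ 9 * (p + p') := card_nearLine u v w x y a b a1 b1 huv p p'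
  have c1 : F1.card ≤ 9 * (p + p') := card_nearLine 1 0 w₁ x y a b a1 b1 (by simp) p p'
  have c2 : F2.card ≤ 9 * (p + p') := card_nearLine 0 1 w₂ x y a b a1 b1 (by simp) p p'
  have cG : p * p' ≤ S.card + 27 * (p + p') := by
    have : G ⊆ S ∪ (F0 ∪ (F1 ∪ F2)) := by
      intro st hst
      simp only [S, F0, F1, F2, Finset.mem_union, Finset.mem_filter, hst, true_and]
      tauto
    have h1 := Finset.card_le_card this
    have h2 := Finset.card_union_le S (F0 ∪ (F1 ∪ F2))
    have h3 := Finset.card_union_le F0 (F1 ∪ F2)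
    have h4 := Finset.card_union_le F1 F2
    have h5 : G.card = p * p' := by simp [hG]
    omega
  have hcard : sideLen R α n * sideLen R β n ≤ 2 * (S.card * (a * b)) := by
    have cG' : (p : ℝ) * p' ≤ S.card + 27 * (p + p') := by exact_mod_cast cG
    obtain ⟨f1, f2⟩ := h.floor_bounds
    obtain ⟨g1, g2⟩ := h.symm.floor_bounds
    have l1 := h.α_lt
    have l2 := h.symm.α_lt
    have hα := h.hα
    have hβ := h.hβ
    have hm : (p * α) * (p' * β) ≤ S.card * (α * β) + 27 * ((p * α) * β + (p' * β) * α) := by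
      have := mul_le_mul_of_nonneg_right cG' (mul_pos hα hβ).le
      linarith
    have hm2 : (1 - α) * (1 - β) ≤ (p * α) * (p' * β) := by
      apply mul_le_mul f1.le g1.le <;> nlinarith
    have hm3 : (p * α) * β ≤ β := by nlinarith
    have hm4 : (p' * β) * α ≤ α := by nlinarith
    have hm5 : (1 : ℝ) ≤ 2 * (S.card * (α * β)) := by nlinarith
    rw [ha, hb, Params.side_succ, Params.side_succ]
    have := mul_pos (h.side_pos n) (h.symm.side_pos n)
    nlinarith
  by_contra hcon
  push Not at hcon
  let B : ℕ × ℕ → Set (ℝ × ℝ) := fun st => hbox R α β (n + 1) (x + st.1 * a) (y + st.2 * b)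
  have hbig : ∀ st ∈ S, ENNReal.ofReal (a * b) ≤ μ (B st) := by
    rintro ⟨s, t⟩ hst
    simp only [hS, hG, Finset.mem_filter, Finset.mem_product, Finset.mem_range] at hst
    obtain ⟨⟨hs, ht⟩, n0, n1, n2⟩ := hst
    obtain ⟨s1, s2⟩ := h.sub_Icc n x s hs
    obtain ⟨t1, t2⟩ := h.symm.sub_Icc n y t ht
    have := hcon (x + s * a) (y + t * b) s1 s2 t1 t2 (hav s t hs ht n0 n1 n2)
    rw [volume_hbox h] at this
    exact this
  have hdisj : Set.PairwiseDisjoint (↑S) B := by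
    rintro ⟨s, t⟩ _ ⟨s', t'⟩ _ hne
    refine Set.disjoint_left.2 ?_
    rintro ⟨z1, z2⟩ hz hz'
    apply hne
    simp only [B, hbox, Set.mem_prod] at hz hz'
    rw [Ico_grid_inj a1 hz.1 hz'.1, Ico_grid_inj b1 hz.2 hz'.2]
  have hsub : (⋃ st ∈ S, B st) ⊆ hbox R α β n x y := by
    apply Set.iUnion₂_subset
    rintro ⟨s, t⟩ hst
    simp only [hS, hG, Finset.mem_filter, Finset.mem_product, Finset.mem_range] at hst
    obtain ⟨⟨hs, ht⟩, -⟩ := hst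
    obtain ⟨s1, s2⟩ := h.sub_Icc n x s hs
    obtain ⟨t1, t2⟩ := h.symm.sub_Icc n y t ht
    exact Set.prod_mono (Set.Ico_subset_Ico s1 s2) (Set.Ico_subset_Ico t1 t2)
  have h1 : (S.card : ENNReal) * ENNReal.ofReal (a * b) ≤ μ (hbox R α β n x y) := by
    calc (S.card : ENNReal) * ENNReal.ofReal (a * b) = ∑ st ∈ S, ENNReal.ofReal (a * b) := by
          simp
      _ ≤ ∑ st ∈ S, μ (B st) := Finset.sum_le_sum hbig
      _ = μ (⋃ st ∈ S, B st) :=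
          (measure_biUnion_finset hdisj (fun st _ => measurableSet_hbox _ _ _ _ _ _)).symm
      _ ≤ _ := measure_mono hsub
  have h2 : volume (hbox R α β n x y) ≤ 2 * ((S.card : ENNReal) * ENNReal.ofReal (a * b)) := by
    rw [volume_hbox h]
    refine (ENNReal.ofReal_le_ofReal hcard).trans ?_
    rw [ENNReal.ofReal_mul (by norm_num), ENNReal.ofReal_mul (by positivity)]
    simp
  exact absurd hμ (not_lt.2 (h2.trans (by gcongr)))

/-- The weighted measure recording the covering sets not yet dealt with at level `n`. -/
noncomputable def potMeasure (m : ℕ → ℕ) (V : ℕ → Set (ℝ × ℝ)) (n : ℕ) : Measure (ℝ × ℝ) :=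
  Measure.sum (fun k => (if n ≤ m k then (2 : ENNReal) ^ (m k - n) else 0) • volume.restrict (V k))

lemma potMeasure_succ (m : ℕ → ℕ) (V : ℕ → Set (ℝ × ℝ)) (n : ℕ) {s : Set (ℝ × ℝ)}
    (hs : MeasurableSet s) : 2 * potMeasure m V (n + 1) s ≤ potMeasure m V n s := by
  unfold potMeasure
  rw [Measure.sum_apply _ hs, Measure.sum_apply _ hs, ← ENNReal.tsum_mul_left]
  refine ENNReal.tsum_le_tsum fun k => ?_
  simp only [Measure.smul_apply, smul_eq_mul]
  rw [← mul_assoc]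
  gcongr
  split_ifs with h1 h2
  · rw [← pow_succ']
    gcongr
    · norm_num
    · omega
  · omega
  · simp
  · simp

lemma le_potMeasure (m : ℕ → ℕ) (V : ℕ → Set (ℝ × ℝ)) (k : ℕ) {s : Set (ℝ × ℝ)}
    (hs : MeasurableSet s) (hsub : s ⊆ V k) : volume s ≤ potMeasure m V (m k) s := by
  unfold potMeasure
  rw [Measure.sum_apply _ hs]
  refine le_trans ?_ (ENNReal.le_tsum k)
  simp [Measure.restrict_apply hs, Set.inter_eq_left.2 hsub]

lemma Params.exists_point {R α β : ℝ} (h : Params R α β) (m : ℕ → ℕ) (V : ℕ → Set (ℝ × ℝ))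
    (h0 : potMeasure m V 0 (hbox R α β 0 0 0) < volume (hbox R α β 0 0 0)) :
    ∃ X Y : ℝ,
      (∀ n, (∀ (q : ℕ) (p r : ℤ), 0 < q → (q : ℝ) < R ^ (n + 1) →
          ¬ (|X - p / q| ≤ sideLen R α (n + 1) ∧ |Y - r / q| ≤ sideLen R β (n + 1))) ∧
        (∀ (q : ℕ) (p : ℤ), 0 < q → (q : ℝ) ^ 2 < (1 / α) ^ (n + 1) →
          ¬ |X - p / q| ≤ sideLen R α (n + 1)) ∧
        (∀ (q : ℕ) (p : ℤ), 0 < q → (q : ℝ) ^ 2 < (1 / β) ^ (n + 1) →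
          ¬ |Y - p / q| ≤ sideLen R β (n + 1))) ∧
      ∀ k, ∃ x y : ℝ, X ∈ Set.Icc x (x + sideLen R α (m k)) ∧
        Y ∈ Set.Icc y (y + sideLen R β (m k)) ∧ ¬ hbox R α β (m k) x y ⊆ V k := by
  let P : ℕ → ℝ × ℝ → Prop := fun n z =>
    potMeasure m V n (hbox R α β n z.1 z.2) < volume (hbox R α β n z.1 z.2)
  have hstep : ∀ n (z : ℝ × ℝ), P n z → ∃ z' : ℝ × ℝ, P (n + 1) z' ∧
      z.1 ≤ z'.1 ∧ z'.1 + sideLen R α (n + 1) ≤ z.1 + sideLen R α n ∧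
      z.2 ≤ z'.2 ∧ z'.2 + sideLen R β (n + 1) ≤ z.2 + sideLen R β n ∧
      Avoid R α β n z'.1 z'.2 := by
    intro n z hz
    obtain ⟨x', y', h1, h2, h3, h4, h5, h6⟩ := h.step n z.1 z.2 (potMeasure m V (n + 1))
      (lt_of_le_of_lt (potMeasure_succ m V n (measurableSet_hbox _ _ _ _ _ _)) hz)
    exact ⟨(x', y'), h6, h1, h2, h3, h4, h5⟩
  choose! nxt hP hx1 hx2 hy1 hy2 hav using hstep
  let z : ℕ → ℝ × ℝ := fun n => Nat.rec (0, 0) (fun n z => nxt n z) n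
  have hz : ∀ n, P n (z n) := by
    intro n
    induction n with
    | zero => exact h0
    | succ n ih => exact hP n _ ih
  let K : ℕ → Set (ℝ × ℝ) := fun n =>
    Set.Icc (z n).1 ((z n).1 + sideLen R α n) ×ˢ Set.Icc (z n).2 ((z n).2 + sideLen R β n)
  have hK : (⋂ n, K n).Nonempty := by
    apply IsCompact.nonempty_iInter_of_sequence_nonempty_isCompact_isClosed
    · intro n
      exact Set.prod_mono (Set.Icc_subset_Icc (hx1 n _ (hz n)) (hx2 n _ (hz n)))
        (Set.Icc_subset_Icc (hy1 n _ (hz n)) (hy2 n _ (hz n)))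
    · intro n
      exact ⟨z n, ⟨le_rfl, by linarith [h.side_pos n]⟩, ⟨le_rfl, by linarith [h.symm.side_pos n]⟩⟩
    · exact isCompact_Icc.prod isCompact_Icc
    · intro n
      exact isClosed_Icc.prod isClosed_Icc
  obtain ⟨⟨X, Y⟩, hXY⟩ := hK
  rw [Set.mem_iInter] at hXY
  refine ⟨X, Y, fun n => ?_, fun k => ⟨(z (m k)).1, (z (m k)).2, (hXY (m k)).1, (hXY (m k)).2, ?_⟩⟩
  · exact hav n _ (hz n) X (hXY (n + 1)).1 Y (hXY (n + 1)).2
  · intro hsub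
    exact absurd (hz (m k)) (not_lt.2 (le_potMeasure m V k (measurableSet_hbox _ _ _ _ _ _) hsub))

lemma dist_gt {X d : ℝ} {q : ℕ} (hq : 0 < q) (h : ¬ |X - (round ((q : ℝ) * X) : ℤ) / q| ≤ d) :
    q * d < distToNearestInt (q * X) := by
  have g : (0 : ℝ) < q := by exact_mod_cast hq
  push Not at h
  have e : distToNearestInt (q * X) = q * |X - (round ((q : ℝ) * X) : ℤ) / q| := by
    unfold distToNearestInt
    rw [← abs_of_pos g, ← abs_mul, abs_of_pos g]
    congr 1
    field_simp
  rw [e]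
  gcongr

lemma bad_of_avoid {R α β X : ℝ} (h : Params R α β)
    (hX : ∀ n, ∀ (q : ℕ) (p : ℤ), 0 < q → (q : ℝ) ^ 2 < (1 / α) ^ (n + 1) →
      ¬ |X - p / q| ≤ sideLen R α (n + 1)) : X ∈ badOneDim := by
  have hα := h.hα
  have hR := h.Rpos
  refine ⟨α / R ^ 3, by positivity, fun q hq => ?_⟩
  have g : (1 : ℝ) ≤ q := by exact_mod_cast hq
  have hα1 : 1 < 1 / α := by
    rw [lt_div_iff₀ hα]; linarith [h.α_lt]
  obtain ⟨n, hn1, hn2⟩ := exists_nat_pow_near (show (1 : ℝ) ≤ (q : ℝ) ^ 2 by nlinarith) hα1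
  refine lt_of_le_of_lt ?_ (dist_gt hq (hX n q _ hq hn2))
  rw [div_pow, one_pow, div_le_iff₀ (by positivity)] at hn1
  unfold sideLen
  rw [div_le_iff₀ (by positivity)]
  calc α / R ^ 3 = α / R ^ 3 * 1 := by ring
    _ ≤ α / R ^ 3 * ((q : ℝ) ^ 2 * α ^ n) := by gcongr
    _ = _ := by ring

lemma pow_bound {R α i d : ℝ} (hR : 1 ≤ R) (hi : 0 < i) (hα : α = R ^ (-(1 + i))) {q n : ℕ}
    (hq : 0 < q) (hn : R ^ n ≤ q) (h : q * sideLen R α (n + 1) < d) :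
    (α / R ^ 3) ^ (1 / i) / q < d ^ (1 / i) := by
  have hR0 : 0 < R := by linarith
  have g : (0 : ℝ) < q := by exact_mod_cast hq
  have hα0 : 0 < α := by rw [hα]; positivity
  have h1 : (q : ℝ) ^ (-(1 + i)) ≤ α ^ n := by
    have : α ^ n = (R ^ n) ^ (-(1 + i)) := by
      rw [hα, ← Real.rpow_natCast, ← Real.rpow_natCast, ← Real.rpow_mul hR0.le,
        ← Real.rpow_mul hR0.le, mul_comm]
    rw [this]
    exact Real.rpow_le_rpow_of_nonpos (by positivity) hn (by linarith)
  have h2 : (α / R ^ 3) * (q : ℝ) ^ (-i) < d := by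
    refine lt_of_le_of_lt ?_ h
    unfold sideLen
    have : (q : ℝ) ^ (-i) = q * (q : ℝ) ^ (-(1 + i)) := by
      rw [show -i = 1 + -(1 + i) by ring, Real.rpow_add g, Real.rpow_one]
    rw [this]
    calc α / R ^ 3 * (q * (q : ℝ) ^ (-(1 + i))) ≤ α / R ^ 3 * (q * α ^ n) := by gcongr
      _ = _ := by ring
  have h3 := Real.rpow_lt_rpow (by positivity) h2 (show 0 < 1 / i by positivity)
  rw [Real.mul_rpow (by positivity) (by positivity), ← Real.rpow_mul g.le,
    show -i * (1 / i) = -1 by field_simp, Real.rpow_neg_one] at h3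
  rwa [div_eq_mul_inv]

/-- The full set under consideration. -/
def targetSet (i j : ℝ) : Set (Fin 2 → ℝ) :=
  {x : Fin 2 → ℝ | x ∈ badPair i j ∧ x 0 ∈ badOneDim ∧ x 1 ∈ badOneDim}

open Classical in
lemma exists_cover {E : Set (Fin 2 → ℝ)} {d : ℝ} (hd : 0 < d) (hE : μH[d] E = 0) {η : ENNReal}
    (hη : η ≠ 0) :
    ∃ (z : ℕ → Fin 2 → ℝ) (r : ℕ → ℝ), (∀ k, 0 < r k ∧ r k ≤ 1) ∧
      (∀ x ∈ E, ∃ k, ∀ l, |x l - z k l| ≤ r k) ∧ ∑' k, ENNReal.ofReal (r k ^ d) < η := by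
  have hη2 : η / 2 ≠ 0 := by simp [hη]
  rw [Measure.hausdorffMeasure_apply] at hE
  simp only [ENNReal.iSup_eq_zero] at hE
  have h1 := hE 1 one_pos
  have h2 : (⨅ (t : ℕ → Set (Fin 2 → ℝ)) (_ : E ⊆ ⋃ n, t n) (_ : ∀ n, Metric.ediam (t n) ≤ 1),
      ∑' n, ⨆ _ : (t n).Nonempty, Metric.ediam (t n) ^ d) < η / 2 := by
    rw [h1]; exact pos_iff_ne_zero.2 hη2
  simp only [iInf_lt_iff] at h2
  obtain ⟨t, ht1, ht2, ht3⟩ := h2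
  obtain ⟨ε, hε, hεs⟩ := ENNReal.exists_pos_sum_of_countable hη2 ℕ
  let D : ℕ → ℝ := fun k => (Metric.ediam (t k)).toReal
  have hD1 : ∀ k, D k ≤ 1 := fun k => by
    have := ENNReal.toReal_mono ENNReal.one_ne_top (ht2 k)
    simpa using this
  have hDt : ∀ k, Metric.ediam (t k) ≠ ⊤ := fun k => ne_top_of_le_ne_top ENNReal.one_ne_top (ht2 k)
  let e : ℕ → ℝ := fun k => min 1 ((ε k : ℝ) ^ (1 / d))
  have he : ∀ k, 0 < e k := fun k => lt_min one_pos (Real.rpow_pos_of_pos (by exact_mod_cast hε k) _)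
  let z : ℕ → Fin 2 → ℝ := fun k => if hk : (t k).Nonempty then hk.some else 0
  refine ⟨z, fun k => max (D k) (e k), fun k => ⟨lt_max_of_lt_right (he k), max_le (hD1 k) (min_le_left _ _)⟩, ?_, ?_⟩
  · intro x hx
    obtain ⟨k, hk⟩ := Set.mem_iUnion.1 (ht1 hx)
    refine ⟨k, fun l => ?_⟩
    have hne : (t k).Nonempty := ⟨x, hk⟩
    have hz : z k ∈ t k := by simp only [z, hne, dif_pos]; exact hne.some_mem
    have h3 : edist x (z k) ≤ Metric.ediam (t k) := Metric.edist_le_ediam_of_mem hk hz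
    have h4 : dist x (z k) ≤ D k := by
      rw [dist_edist]; exact ENNReal.toReal_mono (hDt k) h3
    have h5 := dist_le_pi_dist x (z k) l
    rw [Real.dist_eq] at h5
    exact h5.trans (h4.trans (le_max_left _ _))
  · have hb : ∀ k, ENNReal.ofReal (max (D k) (e k) ^ d) ≤
        (⨆ _ : (t k).Nonempty, Metric.ediam (t k) ^ d) + ε k := by
      intro k
      rcases le_total (D k) (e k) with hc | hc
      · rw [max_eq_right hc]
        refine le_trans ?_ le_add_self
        rw [← ENNReal.ofReal_coe_nnreal]
        apply ENNReal.ofReal_le_ofReal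
        calc e k ^ d ≤ ((ε k : ℝ) ^ (1 / d)) ^ d := by
              exact Real.rpow_le_rpow (he k).le (min_le_right _ _) hd.le
          _ = ε k := by
              rw [← Real.rpow_mul (by positivity), one_div, inv_mul_cancel₀ hd.ne', Real.rpow_one]
      · rw [max_eq_left hc]
        refine le_trans ?_ le_self_add
        have hne : (t k).Nonempty := by
          by_contra hcon
          rw [Set.not_nonempty_iff_eq_empty] at hcon
          have : D k = 0 := by simp [D, hcon]
          linarith [he k]
        simp only [hne, iSup_pos]
        rw [← ENNReal.ofReal_rpow_of_nonneg ENNReal.toReal_nonneg hd.le, ENNReal.ofReal_toReal (hDt k)]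
    calc _ ≤ ∑' k, ((⨆ _ : (t k).Nonempty, Metric.ediam (t k) ^ d) + ε k) :=
          ENNReal.tsum_le_tsum hb
      _ = (∑' k, ⨆ _ : (t k).Nonempty, Metric.ediam (t k) ^ d) + ∑' k, (ε k : ENNReal) :=
          ENNReal.tsum_add
      _ < η / 2 + η / 2 := ENNReal.add_lt_add ht3 hεs
      _ = η := ENNReal.add_halves η

lemma params_of {R i j : ℝ} (hR : 1000 ≤ R) (hi : 0 < i) (hj : 0 < j) (hij : i + j = 1) :
    Params R (R ^ (-(1 + i))) (R ^ (-(1 + j))) := by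
  have hR0 : 0 < R := by linarith
  have aux : ∀ i : ℝ, 0 < i → R ^ (-(1 + i)) * R ≤ 1 := by
    intro i hi
    nth_rw 2 [← Real.rpow_one R]
    rw [← Real.rpow_add hR0]
    exact Real.rpow_le_one_of_one_le_of_nonpos (by linarith) (by linarith)
  refine ⟨hR, by positivity, by positivity, aux i hi, aux j hj, ?_⟩
  rw [← Real.rpow_natCast R 3, ← Real.rpow_add hR0, ← Real.rpow_add hR0]
  have : -(1 + i) + -(1 + j) + ((3 : ℕ) : ℝ) = 0 := by push_cast; linarith
  rw [this, Real.rpow_zero]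

lemma Params.side_le {R α β r : ℝ} (h : Params R α β) {n : ℕ} (hr : 0 < r)
    (hn : 1 / r < R ^ (n + 1)) : sideLen R α (n + 1) ≤ r := by
  have hR := h.Rpos
  have hα := h.hα
  have hR1 : 1 ≤ R ^ 3 := one_le_pow₀ (by linarith [h.hR])
  have h1 : (α * R) ^ (n + 1) ≤ 1 := pow_le_one₀ (by positivity) h.hαR
  rw [mul_pow] at h1
  rw [div_lt_iff₀ hr] at hn
  unfold sideLen
  have h2 : α ^ (n + 1) ≤ r := by
    have hp : 0 < R ^ (n + 1) := by positivity
    by_contra hc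
    push Not at hc
    nlinarith
  exact (div_le_self (by positivity) hR1).trans h2

lemma hausdorff_ne_zero {i j d : ℝ} (hi : 0 < i) (hj : 0 < j) (hij : i + j = 1) (hd : 0 < d)
    (hd2 : d < 2) : μH[d] (targetSet i j) ≠ 0 := by
  intro hE
  set ε := 2 - d with hε
  have hε0 : 0 < ε := by linarith
  obtain ⟨R, hR, hRε⟩ : ∃ R : ℝ, 1000 ≤ R ∧ 2 ≤ R ^ ε := by
    refine ⟨max 1000 (2 ^ (1 / ε)), le_max_left _ _, ?_⟩
    calc (2 : ℝ) = (2 ^ (1 / ε)) ^ ε := by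
          rw [← Real.rpow_mul (by norm_num), one_div, inv_mul_cancel₀ hε0.ne', Real.rpow_one]
      _ ≤ _ := Real.rpow_le_rpow (by positivity) (le_max_right _ _) hε0.le
  have h := params_of hR hi hj hij
  have hR0 := h.Rpos
  set α := R ^ (-(1 + i)) with hα
  set β := R ^ (-(1 + j)) with hβ
  obtain ⟨z, r, hr, hcov, hsum⟩ := exists_cover hd hE (η := ENNReal.ofReal (1 / (32 * R ^ 6)))
    (by simp; positivity)
  have hm : ∀ k, ∃ n : ℕ, R ^ n ≤ 1 / r k ∧ 1 / r k < R ^ (n + 1) := fun k =>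
    exists_nat_pow_near (by rw [le_div_iff₀ (hr k).1]; linarith [(hr k).2]) (by linarith)
  choose n hn1 hn2 using hm
  let m : ℕ → ℕ := fun k => n k + 1
  let V : ℕ → Set (ℝ × ℝ) := fun k =>
    Set.Icc (z k 0 - 2 * r k) (z k 0 + 2 * r k) ×ˢ Set.Icc (z k 1 - 2 * r k) (z k 1 + 2 * r k)
  have hV : ∀ k, (2 : ENNReal) ^ (m k) * volume (V k) ≤ ENNReal.ofReal 32 * ENNReal.ofReal (r k ^ d) := by
    intro k
    have hrk := (hr k).1
    have e1 : volume (V k) = ENNReal.ofReal (4 * r k * (4 * r k)) := by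
      simp only [V]
      rw [Measure.volume_eq_prod, Measure.prod_prod, Real.volume_Icc, Real.volume_Icc,
        ENNReal.ofReal_mul (by positivity)]
      ring_nf
    have e2 : (2 : ENNReal) ^ (m k) = ENNReal.ofReal (2 ^ (m k)) := by
      rw [ENNReal.ofReal_pow (by norm_num)]; simp
    rw [e1, e2, ← ENNReal.ofReal_mul (by positivity), ← ENNReal.ofReal_mul (by positivity)]
    apply ENNReal.ofReal_le_ofReal
    have h1 : (2 : ℝ) ^ (n k) ≤ r k ^ (-ε) := by
      calc (2 : ℝ) ^ (n k) ≤ (R ^ ε) ^ (n k) := by gcongr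
        _ = (R ^ (n k)) ^ ε := by
            rw [← Real.rpow_natCast, ← Real.rpow_natCast, ← Real.rpow_mul hR0.le,
              ← Real.rpow_mul hR0.le, mul_comm]
        _ ≤ (1 / r k) ^ ε := Real.rpow_le_rpow (by positivity) (hn1 k) hε0.le
        _ = r k ^ (-ε) := by rw [one_div, Real.inv_rpow hrk.le, Real.rpow_neg hrk.le]
    have h2 : r k ^ d = r k ^ (-ε) * r k ^ 2 := by
      rw [← Real.rpow_natCast (r k) 2, ← Real.rpow_add hrk]
      congr 1
      push_cast; linarith
    rw [h2]
    simp only [m]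
    rw [pow_succ]
    calc (2 : ℝ) ^ (n k) * 2 * (4 * r k * (4 * r k)) = 32 * ((2 : ℝ) ^ (n k) * r k ^ 2) := by ring
      _ ≤ _ := by gcongr
  have h0 : potMeasure m V 0 (hbox R α β 0 0 0) < volume (hbox R α β 0 0 0) := by
    have hms := measurableSet_hbox R α β 0 0 0
    calc potMeasure m V 0 (hbox R α β 0 0 0) ≤ ∑' k, (2 : ENNReal) ^ (m k) * volume (V k) := by
          unfold potMeasure
          rw [Measure.sum_apply _ hms]
          refine ENNReal.tsum_le_tsum fun k => ?_
          simp only [Measure.smul_apply, smul_eq_mul, Nat.zero_le, if_true, Nat.sub_zero]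
          rw [Measure.restrict_apply hms]
          exact mul_le_mul_right (measure_mono Set.inter_subset_right) _
      _ ≤ ∑' k, ENNReal.ofReal 32 * ENNReal.ofReal (r k ^ d) := ENNReal.tsum_le_tsum hV
      _ = ENNReal.ofReal 32 * ∑' k, ENNReal.ofReal (r k ^ d) := ENNReal.tsum_mul_left
      _ < ENNReal.ofReal 32 * ENNReal.ofReal (1 / (32 * R ^ 6)) :=
          ENNReal.mul_lt_mul_right (by simp) ENNReal.ofReal_ne_top hsum
      _ = volume (hbox R α β 0 0 0) := by
          rw [volume_hbox h, ← ENNReal.ofReal_mul (by norm_num)]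
          congr 1
          unfold sideLen
          field_simp
  obtain ⟨X, Y, hav, hk⟩ := h.exists_point m V h0
  have hmem : ![X, Y] ∈ targetSet i j := by
    refine ⟨?_, bad_of_avoid h (fun n => (hav n).2.1), bad_of_avoid h.symm (fun n => (hav n).2.2)⟩
    have hα0 := h.hα
    have hβ0 := h.hβ
    refine ⟨min ((α / R ^ 3) ^ (1 / i)) ((β / R ^ 3) ^ (1 / j)), by positivity, fun q hq => ?_⟩
    have g : (1 : ℝ) ≤ q := by exact_mod_cast hq
    obtain ⟨n, hn1, hn2⟩ := exists_nat_pow_near g (show 1 < R by linarith)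
    have := (hav n).1 q (round ((q : ℝ) * X)) (round ((q : ℝ) * Y)) hq hn2
    rw [not_and_or] at this
    rcases this with hc | hc
    · left
      refine ⟨hi, lt_of_le_of_lt ?_ (pow_bound (by linarith) hi hα hq hn1 (dist_gt hq hc))⟩
      gcongr
      exact min_le_left _ _
    · right
      refine ⟨hj, lt_of_le_of_lt ?_ (pow_bound (by linarith) hj hβ hq hn1 (dist_gt hq hc))⟩
      gcongr
      exact min_le_right _ _
  obtain ⟨k, hzk⟩ := hcov _ hmem
  obtain ⟨x, y, hx, hy, hns⟩ := hk k
  apply hns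
  have z0 := hzk 0
  have z1 := hzk 1
  simp only [Matrix.cons_val_zero, Matrix.cons_val_one, abs_le] at z0 z1
  have la : sideLen R α (m k) ≤ r k := h.side_le (hr k).1 (hn2 k)
  have lb : sideLen R β (m k) ≤ r k := h.symm.side_le (hr k).1 (hn2 k)
  simp only [Set.mem_Icc] at hx hy
  rintro ⟨a, b⟩ hab
  simp only [hbox, Set.mem_prod, Set.mem_Ico] at hab
  simp only [V, Set.mem_prod, Set.mem_Icc]
  refine ⟨⟨?_, ?_⟩, ?_, ?_⟩ <;> linarith [hab.1.1, hab.1.2, hab.2.1, hab.2.2]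

lemma two_le_dimH {i j : ℝ} (hi : 0 < i) (hj : 0 < j) (hij : i + j = 1) :
    2 ≤ dimH (targetSet i j) := by
  refine le_of_forall_lt fun c hc => ?_
  obtain ⟨d, hd1, hd2⟩ := ENNReal.lt_iff_exists_nnreal_btwn.1 hc
  refine lt_of_lt_of_le hd1 (le_dimH_of_hausdorffMeasure_ne_zero ?_)
  have hd0 : 0 < d := by
    rcases eq_or_ne d 0 with rfl | h
    · simp at hd1
    · exact pos_iff_ne_zero.2 h
  have hd2' : (d : ℝ) < 2 := by exact_mod_cast hd2
  exact hausdorff_ne_zero hi hj hij (by exact_mod_cast hd0) hd2'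

lemma two_le_dimH' {i j : ℝ} (hi : 0 ≤ i) (hj : 0 ≤ j) (hij : i + j = 1) :
    2 ≤ dimH (targetSet i j) := by
  rcases hi.eq_or_lt with rfl | hi
  · have hj1 : j = 1 := by linarith
    subst hj1
    refine (two_le_dimH (i := 1 / 2) (j := 1 / 2) (by norm_num) (by norm_num) (by norm_num)).trans
      (dimH_mono ?_)
    rintro x ⟨-, h1, h2⟩
    refine ⟨?_, h1, h2⟩
    obtain ⟨c, hc, h⟩ := h2
    exact ⟨c, hc, fun q hq => Or.inr ⟨one_pos, by simpa using h q hq⟩⟩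
  rcases hj.eq_or_lt with rfl | hj
  · have hi1 : i = 1 := by linarith
    subst hi1
    refine (two_le_dimH (i := 1 / 2) (j := 1 / 2) (by norm_num) (by norm_num) (by norm_num)).trans
      (dimH_mono ?_)
    rintro x ⟨-, h1, h2⟩
    refine ⟨?_, h1, h2⟩
    obtain ⟨c, hc, h⟩ := h1
    exact ⟨c, hc, fun q hq => Or.inl ⟨one_pos, by simpa using h q hq⟩⟩
  exact two_le_dimH hi hj hij

/-- For any `i, j ≥ 0` with `i + j = 1`, the set `Bad(i,j) ∩ Bad(1,0) ∩ Bad(0,1)` — i.e. the set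
of pairs `(x₁, x₂) ∈ ℝ²` which are `(i,j)`-badly approximable and such that both `x₁` and `x₂`
are badly approximable real numbers — has Hausdorff dimension `2`. -/
theorem dimH_badPair_inter_badProd_eq_two (i j : ℝ) (hi : 0 ≤ i) (hj : 0 ≤ j)
    (hij : i + j = 1) :
    dimH {x : Fin 2 → ℝ | x ∈ badPair i j ∧ x 0 ∈ badOneDim ∧ x 1 ∈ badOneDim} = 2 := by
  apply le_antisymm
  · refine (dimH_mono (Set.subset_univ _)).trans ?_
    rw [Real.dimH_univ_pi_fin]
    norm_num
  · exact two_le_dimH' hi hj hij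
end
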